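/- arXiv:1605.08395 — 3 statements merged into one kernel-verified Lean document; each statement's English description precedes it below -/
import Mathlib

section
/- Let q be a nonzero Gaussian integer and define Φ^ε_q(x) = Φ^ε(qx) (complex multiplication, identifying R^2 with C). Then for every ℓ ∈ Z^2, the Fourier coefficient Φ^ε_q-hat(ℓ) equals φ-hat(ε ℓ/conj(q)) if conj(ℓ)/q ∈ Z^2 (i.e. q divides conj(ℓ) in Z[i]), and equals 0 otherwise. -/
open MeasureTheory Complex GaussianInt

noncomputable def gnorm (q : GaussianInt) : ℝ := max |(q.re : ℝ)| |(q.im : ℝ)|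
noncomputable def snorm2 (z : ℂ) : ℝ := max |z.re| |z.im|
noncomputable def ec (t : ℝ) : ℂ := Complex.exp (-2 * Real.pi * Complex.I * t)
def inn (ξ x : ℂ) : ℝ := ξ.re * x.re + ξ.im * x.im
def unitSquare : Set ℂ := {z : ℂ | z.re ∈ Set.Icc (0:ℝ) 1 ∧ z.im ∈ Set.Icc (0:ℝ) 1}
noncomputable def fcoeff (f : ℂ → ℂ) (ξ : ℂ) : ℂ := ∫ x in unitSquare, ec (inn ξ x) * f x
noncomputable def ftr (f : ℂ → ℂ) (ξ : ℂ) : ℂ := ∫ x : ℂ, ec (inn ξ x) * f x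
noncomputable def Phi (φ : ℂ → ℝ) (ε : ℝ) (x : ℂ) : ℝ :=
  ∑' r : GaussianInt, ε⁻¹ ^ 2 * φ (ε⁻¹ • (x - toComplex r))
noncomputable def Z2 (M : ℝ) : Set GaussianInt := {q | M / 2 < gnorm q ∧ gnorm q ≤ M}
noncomputable def FM (φ : ℂ → ℝ) (τ M : ℝ) (x : ℂ) : ℝ :=
  ((Z2 M).ncard : ℝ)⁻¹ * ∑' q : (Z2 M), Phi φ (M ^ (-τ) / 2) (toComplex q.1 * x)
noncomputable def PM (M : ℝ) : Set GaussianInt := {q | Prime q ∧ M / 2 < gnorm q ∧ gnorm q ≤ M}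
noncomputable def FMP (φ : ℂ → ℝ) (τ M : ℝ) (x : ℂ) : ℝ :=
  ((PM M).ncard : ℝ)⁻¹ * ∑' q : (PM M), Phi φ (M ^ (-τ) / 2) (toComplex q.1 * x)
noncomputable def mhat (μ : Measure ℂ) (ξ : ℂ) : ℂ := ∫ x, ec (inn ξ x) ∂μ

open scoped Pointwise

noncomputable def sqD : Set ℂ := measurableEquivRealProd ⁻¹' (Set.Ico (0:ℝ) 1 ×ˢ Set.Ico (0:ℝ) 1)

def latL : AddSubgroup ℂ := toComplex.toAddMonoidHom.range

lemma mem_sqD (z : ℂ) : z ∈ sqD ↔ (0 ≤ z.re ∧ z.re < 1) ∧ (0 ≤ z.im ∧ z.im < 1) := by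
  simp [sqD, Set.mem_prod]

lemma sqD_ae : unitSquare =ᵐ[volume] sqD := by
  have h1 : unitSquare = measurableEquivRealProd ⁻¹' (Set.Icc (0:ℝ) 1 ×ˢ Set.Icc (0:ℝ) 1) := by
    ext z; simp [unitSquare]; tauto
  rw [h1, sqD]
  apply volume_preserving_equiv_real_prod.quasiMeasurePreserving.preimage_ae_eq
  exact Measure.set_prod_ae_eq Ico_ae_eq_Icc.symm Ico_ae_eq_Icc.symm

lemma sqD_vol : volume sqD = 1 := by
  rw [sqD, volume_preserving_equiv_real_prod.measure_preimage
    (measurableSet_Ico.prod measurableSet_Ico).nullMeasurableSet]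
  rw [Measure.volume_eq_prod, Measure.prod_prod]; simp

lemma sqD_meas : MeasurableSet sqD :=
  measurableEquivRealProd.measurable (measurableSet_Ico.prod measurableSet_Ico)

lemma sqD_sub : sqD ⊆ Metric.closedBall (0:ℂ) 2 := by
  intro z hz
  rw [mem_sqD] at hz
  rw [mem_closedBall_zero_iff]
  have := Complex.norm_le_abs_re_add_abs_im z
  rw [abs_of_nonneg hz.1.1, abs_of_nonneg hz.2.1] at this
  linarith [hz.1.2, hz.2.2]

noncomputable def latEquiv : GaussianInt ≃ latL :=
  Equiv.ofBijective (fun r => ⟨toComplex r, ⟨r, rfl⟩⟩)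
    ⟨fun a b h => toComplex_injective (congrArg Subtype.val h), fun ⟨_, r, hr⟩ => ⟨r, Subtype.ext hr⟩⟩

lemma gi_countable : Countable GaussianInt := by
  have : Function.Injective (fun r : GaussianInt => (r.re, r.im)) := by
    intro a b h
    simp only [Prod.mk.injEq] at h
    exact Zsqrtd.ext h.1 h.2
  exact this.countable

instance latL_countable : Countable latL := by
  have := gi_countable
  exact latEquiv.symm.injective.countable

lemma sqD_fd : IsAddFundamentalDomain latL sqD (volume : Measure ℂ) := by
  apply IsAddFundamentalDomain.mk' sqD_meas.nullMeasurableSet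
  intro x
  refine ⟨latEquiv ⟨-⌊x.re⌋, -⌊x.im⌋⟩, ?_, ?_⟩
  · show toComplex ⟨-⌊x.re⌋, -⌊x.im⌋⟩ + x ∈ sqD
    rw [mem_sqD]
    simp only [add_re, add_im, re_toComplex, im_toComplex]
    push_cast
    have := Int.floor_le x.re
    have := Int.lt_floor_add_one x.re
    have := Int.floor_le x.im
    have := Int.lt_floor_add_one x.im
    refine ⟨⟨?_, ?_⟩, ?_, ?_⟩ <;> linarith
  · intro y hy
    obtain ⟨⟨a, b⟩, rfl⟩ := latEquiv.surjective y
    have hy : toComplex ⟨a, b⟩ + x ∈ sqD := hy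
    rw [mem_sqD] at hy
    simp only [add_re, add_im, re_toComplex, im_toComplex] at hy
    have h1 : ⌊x.re⌋ = -a := by
      rw [Int.floor_eq_iff]; push_cast; constructor <;> linarith [hy.1.1, hy.1.2]
    have h2 : ⌊x.im⌋ = -b := by
      rw [Int.floor_eq_iff]; push_cast; constructor <;> linarith [hy.2.1, hy.2.2]
    rw [h1, h2]; simp

/-- translation invariance of the integral of a periodic function -/
lemma int_trans (F : ℂ → ℂ) (hF : ∀ (r : GaussianInt) x, F (toComplex r + x) = F x) (t : ℂ) :
    ∫ x in sqD, F (t + x) = ∫ x in sqD, F x := by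
  have h2 : IsAddFundamentalDomain latL (t +ᵥ sqD) (volume : Measure ℂ) := sqD_fd.vadd_of_comm t
  have h3 := sqD_fd.setIntegral_eq h2 (f := F) (by
    rintro ⟨_, r, rfl⟩ x
    exact hF r x)
  rw [h3]
  exact ((measurePreserving_add_left volume t).setIntegral_image_emb
    (measurableEmbedding_addLeft t) F sqD).symm

lemma int_mul (F : ℂ → ℂ) (hc : Continuous F)
    (hF : ∀ (r : GaussianInt) x, F (toComplex r + x) = F x) (q : GaussianInt) (hq : q ≠ 0) :
    ∫ x in sqD, F (toComplex q * x) = ∫ x in sqD, F x := by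
  have hq' : toComplex q ≠ 0 := by simpa using hq
  have h1 : ∀ t : ℂ, ∫ x in sqD, F (toComplex q * x + t) = ∫ x in sqD, F (toComplex q * x) := by
    intro t
    rw [← int_trans (fun x => F (toComplex q * x)) _ (t / toComplex q)]
    · congr 1; ext x; congr 1; field_simp; ring
    · intro r x
      rw [mul_add, ← toComplex_mul, hF]
  have h2 : ∀ x : ℂ, ∫ t in sqD, F (toComplex q * x + t) = ∫ t in sqD, F t :=
    fun x => int_trans F hF _
  have h3 := integral_integral_swap (μ := volume.restrict sqD) (ν := volume.restrict sqD)
    (f := fun x t => F (toComplex q * x + t)) (by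
      rw [Measure.prod_restrict]
      have : IntegrableOn (Function.uncurry fun x t => F (toComplex q * x + t))
          (Metric.closedBall (0:ℂ) 2 ×ˢ Metric.closedBall (0:ℂ) 2) (volume.prod volume) := by
        apply ContinuousOn.integrableOn_compact
        · exact (isCompact_closedBall _ _).prod (isCompact_closedBall _ _)
        · apply Continuous.continuousOn
          unfold Function.uncurry
          fun_prop
      exact this.mono_set (Set.prod_mono sqD_sub sqD_sub))
  simp only [h1, h2] at h3
  simpa [Measure.real, sqD_vol] using h3.symm

lemma ec_add (a b : ℝ) : ec (a + b) = ec a * ec b := by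
  unfold ec; rw [← Complex.exp_add]; push_cast; ring_nf

lemma ec_one_iff (a : ℝ) : ec a = 1 ↔ ∃ n : ℤ, a = n := by
  unfold ec
  rw [Complex.exp_eq_one_iff]
  have hp : (2 * Real.pi * Complex.I : ℂ) ≠ 0 := Complex.two_pi_I_ne_zero
  constructor
  · rintro ⟨n, hn⟩
    refine ⟨-n, ?_⟩
    have : (a : ℂ) = ((-n : ℤ) : ℝ) := by
      apply mul_right_cancel₀ hp
      push_cast
      linear_combination -hn
    exact_mod_cast this
  · rintro ⟨n, rfl⟩
    exact ⟨-n, by push_cast; ring⟩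

lemma inn_eq (ξ x : ℂ) : inn ξ x = ((starRingEnd ℂ) ξ * x).re := by
  simp [inn]

lemma inn_add (ξ x y : ℂ) : inn ξ (x + y) = inn ξ x + inn ξ y := by
  simp [inn]; ring

lemma ec_lat (m r : GaussianInt) : ec (inn (toComplex m) (toComplex r)) = 1 := by
  rw [ec_one_iff]
  exact ⟨m.re * r.re + m.im * r.im, by simp [inn]⟩

lemma ec_cont (ξ : ℂ) : Continuous fun x => ec (inn ξ x) := by
  unfold ec inn; fun_prop

lemma fin_lat (R : ℝ) : {r : GaussianInt | ‖toComplex r‖ ≤ R}.Finite := by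
  have hf : ((Set.Icc (-⌈R⌉) ⌈R⌉) ×ˢ (Set.Icc (-⌈R⌉) ⌈R⌉) : Set (ℤ × ℤ)).Finite :=
    (Set.finite_Icc _ _).prod (Set.finite_Icc _ _)
  refine (hf.preimage (f := fun r : GaussianInt => (r.re, r.im)) ?_).subset ?_
  · intro a _ b _ h
    simp only [Prod.mk.injEq] at h
    exact Zsqrtd.ext h.1 h.2
  · intro r hr
    have h0 : R ≤ ⌈R⌉ := Int.le_ceil R
    have h1 := (Complex.abs_re_le_norm (toComplex r)).trans (hr.trans h0)
    have h2 := (Complex.abs_im_le_norm (toComplex r)).trans (hr.trans h0)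
    rw [← GaussianInt.intCast_re, abs_le] at h1
    rw [← GaussianInt.intCast_im, abs_le] at h2
    simp only [Set.mem_preimage, Set.mem_prod, Set.mem_Icc]
    exact_mod_cast And.intro h1 h2

lemma Phi_per (φ : ℂ → ℝ) (ε : ℝ) (s : GaussianInt) (x : ℂ) :
    Phi φ ε (toComplex s + x) = Phi φ ε x := by
  unfold Phi
  rw [← (Equiv.addLeft s).tsum_eq]
  apply tsum_congr
  intro r
  simp

lemma supp_bd (φ : ℂ → ℝ) (hc : Continuous φ)
    (hs : Function.support φ ⊆ {z : ℂ | snorm2 z ≤ 1}) (ε : ℝ) (hε : 0 < ε) (z : ℂ) (h : φ (ε⁻¹ • z) ≠ 0) : ‖z‖ ≤ 2 * ε := by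
  have h1 : snorm2 (ε⁻¹ • z) ≤ 1 := hs h
  have h2 := Complex.norm_le_abs_re_add_abs_im (ε⁻¹ • z)
  have h3 := (le_max_left _ _).trans h1
  have h4 := (le_max_right _ _).trans h1
  have h5 : ‖ε⁻¹ • z‖ ≤ 2 := by linarith
  rw [norm_smul, norm_inv, Real.norm_of_nonneg hε.le, inv_mul_le_iff₀ hε] at h5
  linarith

lemma Phi_fin (φ : ℂ → ℝ) (hc : Continuous φ)
    (hs : Function.support φ ⊆ {z : ℂ | snorm2 z ≤ 1}) (ε : ℝ) (hε : 0 < ε) (R : ℝ) : ∃ S : Finset GaussianInt, ∀ x : ℂ, ‖x‖ ≤ R → ∀ r ∉ S,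
    φ (ε⁻¹ • (x - toComplex r)) = 0 := by
  refine ⟨(fin_lat (R + 2 * ε)).toFinset, fun x hx r hr => ?_⟩
  by_contra h
  apply hr
  have := supp_bd φ hc hs ε hε _ h
  simp only [Set.Finite.mem_toFinset, Set.mem_ofPred_eq]
  have h2 := norm_sub_norm_le (toComplex r) x
  rw [norm_sub_rev] at h2
  linarith

lemma Phi_cont (φ : ℂ → ℝ) (hc : Continuous φ)
    (hs : Function.support φ ⊆ {z : ℂ | snorm2 z ≤ 1}) (ε : ℝ) (hε : 0 < ε) : Continuous (Phi φ ε) := by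
  rw [continuous_iff_continuousAt]
  intro x
  obtain ⟨S, hS⟩ := Phi_fin φ hc hs ε hε (‖x‖ + 1)
  have h1 : Continuous fun y => ∑ r ∈ S, ε⁻¹ ^ 2 * φ (ε⁻¹ • (y - toComplex r)) := by fun_prop
  apply h1.continuousAt.congr
  have : Metric.ball x 1 ∈ nhds x := Metric.ball_mem_nhds _ one_pos
  filter_upwards [this] with y hy
  unfold Phi
  rw [tsum_eq_sum]
  intro r hr
  rw [hS y _ r hr, mul_zero]
  rw [mem_ball_iff_norm] at hy
  have := norm_sub_norm_le y x
  linarith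

lemma h_int (φ : ℂ → ℝ) (hc : Continuous φ)
    (hs : Function.support φ ⊆ {z : ℂ | snorm2 z ≤ 1}) (ε : ℝ) (hε : 0 < ε) (ξ : ℂ) :
    Integrable fun x : ℂ => ec (inn ξ x) * ((ε⁻¹ ^ 2 * φ (ε⁻¹ • x) : ℝ) : ℂ) := by
  apply Continuous.integrable_of_hasCompactSupport
  · have := ec_cont ξ
    fun_prop
  · apply HasCompactSupport.of_support_subset_isCompact (isCompact_closedBall (0:ℂ) (2 * ε))
    intro z hz
    rw [mem_closedBall_zero_iff]
    apply supp_bd φ hc hs ε hε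
    intro h
    apply hz
    simp only [h, mul_zero, Complex.ofReal_zero]

lemma unfold_int (φ : ℂ → ℝ) (hc : Continuous φ)
    (hs : Function.support φ ⊆ {z : ℂ | snorm2 z ≤ 1}) (ε : ℝ) (hε : 0 < ε) (m : GaussianInt) :
    ∫ x in sqD, ec (inn (toComplex m) x) * (Phi φ ε x : ℂ) =
      ∫ x : ℂ, ec (inn (toComplex m) x) * ((ε⁻¹ ^ 2 * φ (ε⁻¹ • x) : ℝ) : ℂ) := by
  rw [sqD_fd.integral_eq_tsum'' _ (h_int φ hc hs ε hε _), ← latEquiv.tsum_eq,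
    ← (Equiv.neg GaussianInt).tsum_eq]
  have hterm : ∀ (r : GaussianInt) (x : ℂ),
      ec (inn (toComplex m) (latEquiv (Equiv.neg GaussianInt r) +ᵥ x)) *
        ((ε⁻¹ ^ 2 * φ (ε⁻¹ • (latEquiv (Equiv.neg GaussianInt r) +ᵥ x)) : ℝ) : ℂ) =
      ec (inn (toComplex m) x) * ((ε⁻¹ ^ 2 * φ (ε⁻¹ • (x - toComplex r)) : ℝ) : ℂ) := by
    intro r x
    have : latEquiv (Equiv.neg GaussianInt r) +ᵥ x = toComplex (-r) + x := rfl
    rw [this, inn_add, ec_add, ec_lat, one_mul, toComplex_neg, neg_add_eq_sub]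
  simp only [hterm]
  obtain ⟨S, hS⟩ := Phi_fin φ hc hs ε hε 2
  rw [tsum_eq_sum (s := S), ← integral_finsetSum]
  · apply setIntegral_congr_fun sqD_meas
    intro x hx
    have hx' : ‖x‖ ≤ 2 := mem_closedBall_zero_iff.1 (sqD_sub hx)
    simp only
    unfold Phi
    rw [tsum_eq_sum (s := S), Complex.ofReal_sum, Finset.mul_sum]
    · intro r hr
      rw [hS x hx' r hr, mul_zero]
  · intro r _
    have : IntegrableOn (fun x => ec (inn (toComplex m) x) *
        ((ε⁻¹ ^ 2 * φ (ε⁻¹ • (x - toComplex r)) : ℝ) : ℂ)) (Metric.closedBall (0:ℂ) 2) := by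
      apply ContinuousOn.integrableOn_compact (isCompact_closedBall _ _)
      apply Continuous.continuousOn
      have := ec_cont (toComplex m)
      fun_prop
    exact this.mono_set sqD_sub
  · intro r hr
    rw [setIntegral_congr_fun (g := fun _ => 0) sqD_meas]
    · simp
    · intro x hx
      have hx' : ‖x‖ ≤ 2 := mem_closedBall_zero_iff.1 (sqD_sub hx)
      simp only [hS x hx' r hr, mul_zero, Complex.ofReal_zero]

lemma scale_int (φ : ℂ → ℝ) (hc : Continuous φ)
    (hs : Function.support φ ⊆ {z : ℂ | snorm2 z ≤ 1}) (ε : ℝ) (hε : 0 < ε) (ξ : ℂ) :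
    ∫ x : ℂ, ec (inn ξ x) * ((ε⁻¹ ^ 2 * φ (ε⁻¹ • x) : ℝ) : ℂ) =
      ftr (fun x => (φ x : ℂ)) (ε • ξ) := by
  unfold ftr
  have := Measure.integral_comp_smul (volume : Measure ℂ)
    (fun x => ec (inn (ε • ξ) x) * (φ x : ℂ)) ε⁻¹
  rw [Complex.finrank_real_complex] at this
  have h2 : |((ε⁻¹ ^ 2)⁻¹ : ℝ)| = ε ^ 2 := by
    rw [abs_of_pos (by positivity)]; simp
  rw [h2] at this
  have h3 : ∀ x : ℂ, inn (ε • ξ) (ε⁻¹ • x) = inn ξ x := by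
    intro x
    simp [inn]
    field_simp
  simp only [h3] at this
  have h4 : ∀ x : ℂ, ec (inn ξ x) * ((ε⁻¹ ^ 2 * φ (ε⁻¹ • x) : ℝ) : ℂ) =
      ((ε⁻¹ ^ 2 : ℝ) : ℂ) * (ec (inn ξ x) * (φ (ε⁻¹ • x) : ℂ)) := by
    intro x; push_cast; ring
  simp only [h4]
  rw [integral_const_mul, this, Complex.real_smul, ← mul_assoc, ← Complex.ofReal_mul]
  have : ε⁻¹ ^ 2 * ε ^ 2 = 1 := by field_simp
  rw [this]; simp

theorem stmt3 (K : ℕ) (φ : ℂ → ℝ) (hφ : ContDiff ℝ K φ) (hφpos : ∀ x, 0 ≤ φ x)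
    (hφsupp : Function.support φ ⊆ {z : ℂ | snorm2 z ≤ 1})
    (hφint : ∫ x : ℂ, φ x = 1) (ε : ℝ) (hε : 0 < ε)
    (q ℓ : GaussianInt) (hq : q ≠ 0) :
    (q ∣ star ℓ →
      fcoeff (fun x => (Phi φ ε (toComplex q * x) : ℂ)) (toComplex ℓ) =
        ftr (fun x => (φ x : ℂ)) (ε • (toComplex ℓ / (starRingEnd ℂ) (toComplex q)))) ∧
    (¬ q ∣ star ℓ →
      fcoeff (fun x => (Phi φ ε (toComplex q * x) : ℂ)) (toComplex ℓ) = 0) := by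
  have hc := hφ.continuous
  have hq' : toComplex q ≠ 0 := by simpa using hq
  have hcq : (starRingEnd ℂ) (toComplex q) ≠ 0 := by simpa using hq
  unfold fcoeff
  rw [setIntegral_congr_set sqD_ae]
  constructor
  · rintro ⟨k, hk⟩
    have hl : toComplex ℓ = (starRingEnd ℂ) (toComplex q) * toComplex (star k) := by
      rw [← toComplex_star, ← toComplex_mul, mul_comm, ← star_mul, ← hk, star_star]
    have hd : toComplex ℓ / (starRingEnd ℂ) (toComplex q) = toComplex (star k) := by
      rw [hl]; field_simp
    have hi : ∀ x, inn (toComplex ℓ) x = inn (toComplex (star k)) (toComplex q * x) := by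
      intro x
      rw [inn_eq, inn_eq, hl, map_mul, Complex.conj_conj]
      congr 1; ring
    rw [hd, ← scale_int φ hc hφsupp ε hε, ← unfold_int φ hc hφsupp ε hε]
    simp only [hi]
    apply int_mul (fun y => ec (inn (toComplex (star k)) y) * (Phi φ ε y : ℂ)) _ _ q hq
    · have := ec_cont (toComplex (star k))
      have := Phi_cont φ hc hφsupp ε hε
      fun_prop
    · intro r x
      rw [Phi_per, inn_add, ec_add, ec_lat, one_mul]
  · intro hnd
    by_contra hne
    apply hnd
    have key : ∀ s : GaussianInt, ∃ n : ℤ, inn (toComplex ℓ) (toComplex s / toComplex q) = n := by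
      intro s
      rw [← ec_one_iff]
      have h := int_trans
        (fun x => ec (inn (toComplex ℓ) x) * (Phi φ ε (toComplex q * x) : ℂ)) (by
          intro r x
          rw [mul_add, ← toComplex_mul, Phi_per, inn_add, ec_add, ec_lat, one_mul])
        (toComplex s / toComplex q)
      have h2 : ∀ x : ℂ, toComplex q * (toComplex s / toComplex q + x) =
          toComplex s + toComplex q * x := by intro x; field_simp
      simp only [h2, Phi_per, inn_add, ec_add, mul_assoc] at h
      rw [integral_const_mul] at h
      exact mul_right_cancel₀ hne (by rw [h, one_mul])
    obtain ⟨a, ha⟩ := key 1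
    obtain ⟨b, hb⟩ := key ⟨0, 1⟩
    refine ⟨⟨a, -b⟩, ?_⟩
    apply toComplex_injective
    rw [toComplex_mul, toComplex_star]
    rw [inn_eq] at ha hb
    have hdiv : (starRingEnd ℂ) (toComplex ℓ) / toComplex q = toComplex ⟨a, -b⟩ := by
      apply Complex.ext
      · rw [re_toComplex, ← ha, toComplex_one, mul_one_div]
      · rw [im_toComplex]
        have : (starRingEnd ℂ) (toComplex ℓ) * (toComplex ⟨0, 1⟩ / toComplex q) =
            ((starRingEnd ℂ) (toComplex ℓ) / toComplex q) * Complex.I := by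
          rw [toComplex_def' 0 1]; push_cast; ring
        rw [this, Complex.mul_I_re] at hb
        push_cast
        linarith
    rw [← hdiv]; field_simp
end

section
/- Suppose for every δ > 0, every M_0 > 0, and every χ ∈ C_c^K(R^2) there exists M ≥ M_0 with |(χ F_M)-hat(ξ) − χ-hat(ξ)| ≤ δ g(ξ) for all ξ ∈ R^2, where g is a fixed bounded positive function with g(0) = 1. Then, starting from a non-negative χ_0 ∈ C_c^K(R^2) with integral 1 supported in a closed ball B, there exists a nonzero finite Borel measure μ supported in B ∩ ⋂_k supp(F_{M_k}) for some sequence M_k with M_k ≤ M_{k+1}/2, satisfying |μ-hat(ξ)| ≤ C g(ξ) for all ξ and |μ-hat(0)| ≥ 1/2. -/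
open MeasureTheory Complex GaussianInt

open Filter Topology in
lemma aux_closed_mhat (ξ : ℂ) (r : ℝ) :
    IsClosed {μ : FiniteMeasure ℂ | ‖mhat (μ : Measure ℂ) ξ‖ ≤ r} := by
  have hc : Continuous (fun x : ℂ => ec (inn ξ x)) := by unfold ec inn; fun_prop
  have hn : ∀ x : ℂ, ‖ec (inn ξ x)‖ ≤ 1 := by
    intro x
    unfold ec
    rw [Complex.norm_exp]
    simp
  have : Continuous (fun μ : FiniteMeasure ℂ => mhat (μ : Measure ℂ) ξ) := by
    rw [continuous_iff_continuousAt]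
    intro μ
    exact (FiniteMeasure.tendsto_iff_forall_integral_rclike_tendsto ℂ).1 tendsto_id
      (BoundedContinuousFunction.ofNormedAddCommGroup _ hc 1 hn)
  exact isClosed_le this.norm continuous_const

lemma aux_mhat_zero (μ : Measure ℂ) [IsFiniteMeasure μ] : mhat μ 0 = (μ.real Set.univ : ℂ) := by
  simp [mhat, ec, inn]

/-- The measure with density `χ`. -/
noncomputable def auxm (χ : ℂ → ℝ) : Measure ℂ :=
  volume.withDensity (fun x => ENNReal.ofReal (χ x))

lemma auxm_finite (χ : ℂ → ℝ) (hc : Continuous χ) (hs : HasCompactSupport χ) :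
    IsFiniteMeasure (auxm χ) := by
  have := (hc.integrable_of_hasCompactSupport hs (μ := volume)).lintegral_lt_top
  exact isFiniteMeasure_withDensity this.ne

lemma auxm_hat (χ : ℂ → ℝ) (hc : Continuous χ) (hp : ∀ x, 0 ≤ χ x) (ξ : ℂ) :
    mhat (auxm χ) ξ = ftr (fun x => (χ x : ℂ)) ξ := by
  unfold mhat auxm ftr
  rw [integral_withDensity_eq_integral_toReal_smul (by fun_prop) (by simp)]
  congr 1
  ext x
  rw [ENNReal.toReal_ofReal (hp x), Complex.real_smul, mul_comm]

lemma auxm_null (χ : ℂ → ℝ) (A : Set ℂ) (hA : MeasurableSet A) (h : ∀ x, χ x ≠ 0 → x ∈ A) :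
    auxm χ Aᶜ = 0 := by
  unfold auxm
  rw [withDensity_apply _ hA.compl]
  refine setLIntegral_eq_zero hA.compl fun x hx => ?_
  have : χ x = 0 := by
    by_contra h0
    exact hx (h x h0)
  simp [this]

theorem stmt18 (K : ℕ) (F : ℝ → ℂ → ℝ)
    (hFpos : ∀ M x, 0 ≤ F M x)
    (hFper : ∀ (M : ℝ) (x : ℂ) (m : GaussianInt), F M (x + toComplex m) = F M x)
    (hFsm : ∀ M, ContDiff ℝ K (F M))
    (g : ℂ → ℝ) (hgpos : ∀ ξ, 0 < g ξ) (hgbdd : ∃ Cg : ℝ, ∀ ξ, g ξ ≤ Cg) (hg0 : g 0 = 1)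
    (hrec : ∀ δ > (0 : ℝ), ∀ M₀ > (0 : ℝ), ∀ χ : ℂ → ℝ,
      ContDiff ℝ K χ → HasCompactSupport χ →
      ∃ M ≥ M₀, ∀ ξ : ℂ,
        ‖ftr (fun x => ((χ x * F M x : ℝ) : ℂ)) ξ - ftr (fun x => (χ x : ℂ)) ξ‖ ≤ δ * g ξ)
    (B : Set ℂ) (x₀ : ℂ) (ρ : ℝ) (hB : B = Metric.closedBall x₀ ρ)
    (χ₀ : ℂ → ℝ) (hχ₀sm : ContDiff ℝ K χ₀) (hχ₀c : HasCompactSupport χ₀)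
    (hχ₀pos : ∀ x, 0 ≤ χ₀ x) (hχ₀supp : Function.support χ₀ ⊆ B)
    (hχ₀int : ∫ x : ℂ, χ₀ x = 1)
    (hχ₀g : ∃ C : ℝ, ∀ ξ, ‖ftr (fun x => (χ₀ x : ℂ)) ξ‖ ≤ C * g ξ) :
    ∃ M : ℕ → ℝ, (∀ k, M k ≤ M (k + 1) / 2) ∧
      ∃ μ : Measure ℂ, IsFiniteMeasure μ ∧ μ ≠ 0 ∧
        μ (B ∩ ⋂ k, closure (Function.support (F (M k))))ᶜ = 0 ∧
        (∃ C : ℝ, ∀ ξ, ‖mhat μ ξ‖ ≤ C * g ξ) ∧ 1 / 2 ≤ ‖mhat μ 0‖ := by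
  obtain ⟨C, hC⟩ := hχ₀g
  let P : (ℂ → ℝ) × ℝ → Prop := fun s =>
    ContDiff ℝ K s.1 ∧ HasCompactSupport s.1 ∧ (∀ x, 0 ≤ s.1 x) ∧ 0 < s.2
  have step : ∀ (k : ℕ) (s : {s // P s}), ∃ t : {s // P s}, 2 * s.1.2 ≤ t.1.2 ∧
      t.1.1 = (fun x => s.1.1 x * F t.1.2 x) ∧
      ∀ ξ, ‖ftr (fun x => (t.1.1 x : ℂ)) ξ - ftr (fun x => (s.1.1 x : ℂ)) ξ‖
        ≤ (1 / 2) ^ (k + 2) * g ξ := by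
    rintro k ⟨⟨χ, m⟩, h1, h2, h3, h4⟩
    simp only at h1 h2 h3 h4
    obtain ⟨M, hM, hb⟩ := hrec ((1 / 2) ^ (k + 2)) (by positivity) (2 * m) (by positivity) χ h1 h2
    exact ⟨⟨⟨fun x => χ x * F M x, M⟩, h1.mul (hFsm M), h2.mul_right,
      fun x => mul_nonneg (h3 x) (hFpos M x), by simp only; linarith⟩, hM, rfl, hb⟩
  choose nxt hn1 hn2 hn3 using step
  let s : ℕ → {s // P s} := fun k =>
    Nat.rec ⟨⟨χ₀, 1⟩, hχ₀sm, hχ₀c, hχ₀pos, one_pos⟩ (fun k t => nxt k t) k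
  have s0 : (s 0).1.1 = χ₀ := rfl
  have ss : ∀ k, s (k + 1) = nxt k (s k) := fun k => rfl
  have hM : ∀ k, 2 * (s k).1.2 ≤ (s (k + 1)).1.2 := fun k => hn1 k (s k)
  have hχ : ∀ k, (s (k + 1)).1.1 = (fun x => (s k).1.1 x * F (s (k + 1)).1.2 x) :=
    fun k => hn2 k (s k)
  have hd : ∀ k ξ, ‖ftr (fun x => ((s (k + 1)).1.1 x : ℂ)) ξ - ftr (fun x => ((s k).1.1 x : ℂ)) ξ‖
        ≤ (1 / 2) ^ (k + 2) * g ξ := fun k => hn3 k (s k)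
  clear_value s
  clear hn1 hn2 hn3 ss
  have htot : ∀ k ξ, ‖ftr (fun x => ((s k).1.1 x : ℂ)) ξ - ftr (fun x => (χ₀ x : ℂ)) ξ‖
      ≤ (1 / 2 - (1 / 2) ^ (k + 1)) * g ξ := by
    intro k ξ
    induction k with
    | zero => simp [s0]
    | succ k ih =>
      have h := norm_sub_le_norm_sub_add_norm_sub (ftr (fun x => ((s (k + 1)).1.1 x : ℂ)) ξ)
        (ftr (fun x => ((s k).1.1 x : ℂ)) ξ) (ftr (fun x => (χ₀ x : ℂ)) ξ)
      have h2 := hd k ξ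
      have h3 : ((1 / 2 : ℝ) - (1 / 2) ^ (k + 1 + 1)) * g ξ
        = (1 / 2) ^ (k + 2) * g ξ + (1 / 2 - (1 / 2) ^ (k + 1)) * g ξ := by ring
      linarith
  have htot' : ∀ k ξ, ‖ftr (fun x => ((s k).1.1 x : ℂ)) ξ - ftr (fun x => (χ₀ x : ℂ)) ξ‖
      ≤ 1 / 2 * g ξ := fun k ξ => (htot k ξ).trans
        (mul_le_mul_of_nonneg_right (by linarith [show (0:ℝ) < (1 / 2) ^ (k + 1) by positivity])
          (hgpos ξ).le)
  have hBc : IsCompact B := hB ▸ isCompact_closedBall x₀ ρ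
  let T : ℕ → Set ℂ := fun n => B ∩ ⋂ i, ⋂ (_ : i < n), closure (Function.support (F (s (i + 1)).1.2))
  have hTc : ∀ n, IsCompact (T n) := fun n =>
    hBc.inter_right (isClosed_iInter fun i => isClosed_iInter fun _ => isClosed_closure)
  have hsupp : ∀ k x, (s k).1.1 x ≠ 0 → x ∈ T k := by
    intro k x
    induction k with
    | zero =>
      intro h
      rw [s0] at h
      exact ⟨hχ₀supp h, by simp⟩
    | succ k ih =>
      intro h
      rw [hχ k] at h
      have h1 := ih (left_ne_zero_of_mul h)
      have h2 := right_ne_zero_of_mul h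
      refine ⟨h1.1, ?_⟩
      have h3 := h1.2
      simp only [Set.mem_iInter] at h3 ⊢
      intro i hi
      rcases Nat.lt_succ_iff_lt_or_eq.1 hi with hi | rfl
      · exact h3 i hi
      · exact subset_closure h2
  have hcont : ∀ k, Continuous (s k).1.1 := fun k => (s k).2.1.continuous
  have hpos : ∀ k x, 0 ≤ (s k).1.1 x := fun k => (s k).2.2.2.1
  let m : ℕ → FiniteMeasure ℂ := fun k => ⟨auxm (s k).1.1, auxm_finite _ (hcont k) (s k).2.2.1⟩
  have hmhat : ∀ k ξ, mhat (m k : Measure ℂ) ξ = ftr (fun x => ((s k).1.1 x : ℂ)) ξ :=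
    fun k ξ => auxm_hat _ (hcont k) (hpos k) ξ
  have hftr0 : ftr (fun x => (χ₀ x : ℂ)) 0 = 1 := by
    have : ∫ x : ℂ, (χ₀ x : ℂ) = 1 := by
      rw [integral_complex_ofReal, hχ₀int]; simp
    simpa [ftr, ec, inn] using this
  have hmass : ∀ k, |((m k).mass : ℝ) - 1| ≤ 1 / 2 := by
    intro k
    have h := htot' k 0
    rw [← hmhat, aux_mhat_zero, hftr0, hg0, mul_one] at h
    rw [← Complex.ofReal_one, ← Complex.ofReal_sub, Complex.norm_real] at h
    exact h
  let S : ℕ → Set (FiniteMeasure ℂ) := fun n => {μ | μ.mass ≤ 2 ∧ μ (T n)ᶜ = 0}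
  have hSc : ∀ n, IsCompact (S n) := fun n =>
    isCompact_setOfPred_finiteMeasure_le_of_isCompact 2 (hTc n)
  have hTanti : ∀ {n k}, n ≤ k → T k ⊆ T n := by
    intro n k hnk x hx
    refine ⟨hx.1, ?_⟩
    have h3 := hx.2
    simp only [Set.mem_iInter] at h3 ⊢
    exact fun i hi => h3 i (hi.trans_le hnk)
  have hmS : ∀ n k, n ≤ k → m k ∈ S n := by
    intro n k hnk
    refine ⟨?_, ?_⟩
    · have := (abs_le.1 (hmass k)).2
      rw [← NNReal.coe_le_coe]
      push_cast
      linarith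
    · rw [FiniteMeasure.null_iff_toMeasure_null]
      exact auxm_null _ _ (hTc n).measurableSet (fun x hx => hTanti hnk (hsupp k x hx))
  let U : Ultrafilter ℕ := Filter.hyperfilter ℕ
  have hU : (U : Filter ℕ) ≤ Filter.atTop := by
    rw [← Nat.cofinite_eq_atTop]; exact Filter.hyperfilter_le_cofinite
  obtain ⟨μ, -, hμ⟩ := (hSc 0).ultrafilter_le_nhds (U.map m) (by
    rw [Filter.le_principal_iff]
    exact Filter.mem_map.2 (Filter.Eventually.of_forall (f := (U : Filter ℕ)) (fun k => hmS 0 k (Nat.zero_le k))))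
  have hlim : Filter.Tendsto m (U : Filter ℕ) (nhds μ) := hμ
  have hμS : ∀ n, μ ∈ S n := fun n =>
    (hSc n).isClosed.mem_of_tendsto hlim (hU ((Filter.eventually_ge_atTop n).mono (hmS n)))
  have hμhat : ∀ ξ, ‖mhat (μ : Measure ℂ) ξ‖ ≤ (C + 1 / 2) * g ξ := by
    intro ξ
    refine (aux_closed_mhat ξ ((C + 1 / 2) * g ξ)).mem_of_tendsto hlim
      (Filter.Eventually.of_forall fun k => ?_)
    have h1 := htot' k ξ
    have h2 := norm_sub_norm_le (ftr (fun x => ((s k).1.1 x : ℂ)) ξ) (ftr (fun x => (χ₀ x : ℂ)) ξ)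
    have h3 := hC ξ
    simp only [Set.mem_ofPred_eq, hmhat]
    linarith
  have hμmass : (1 / 2 : ℝ) ≤ (μ.mass : ℝ) := by
    have hcl : IsClosed {ν : FiniteMeasure ℂ | (1 / 2 : ℝ) ≤ (ν.mass : ℝ)} :=
      isClosed_le continuous_const (NNReal.continuous_coe.comp FiniteMeasure.continuous_mass)
    refine hcl.mem_of_tendsto hlim (Filter.Eventually.of_forall fun k => ?_)
    have := (abs_le.1 (hmass k)).1
    simp only [Set.mem_ofPred_eq]
    linarith
  refine ⟨fun k => (s (k + 1)).1.2, fun k => by linarith [hM (k + 1)], μ, inferInstance, ?_, ?_,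
    ⟨C + 1 / 2, hμhat⟩, ?_⟩
  · intro h
    have h0 : μ.mass = 0 := by
      rw [FiniteMeasure.mass_zero_iff]
      exact FiniteMeasure.toMeasure_injective h
    rw [h0] at hμmass
    norm_num at hμmass
  · have : (B ∩ ⋂ k, closure (Function.support (F (s (k + 1)).1.2)))ᶜ ⊆ ⋃ n, (T n)ᶜ := by
      rw [← Set.compl_iInter, Set.compl_subset_compl]
      intro x hx
      rw [Set.mem_iInter] at hx
      refine ⟨(hx 0).1, Set.mem_iInter.2 fun k => ?_⟩
      have := (hx (k + 1)).2
      simp only [Set.mem_iInter] at this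
      exact this k (Nat.lt_succ_self k)
    refine measure_mono_null this (measure_iUnion_null fun n => ?_)
    exact (FiniteMeasure.null_iff_toMeasure_null _ _).1 (hμS n).2
  · rw [aux_mhat_zero, Complex.norm_real]
    exact hμmass.trans (le_abs_self _)
end

section
/- If ℓ is a nonzero Gaussian integer with |ℓ|_∞ ≥ 2 and M ≥ 4, then |F_M-hat(ℓ)| ≤ C |ℓ|_∞^{-a} ln|ℓ|_∞ for an absolute constant C, where F_M is built from Gaussian primes and a = 2/(1+τ). -/
open MeasureTheory Complex GaussianInt

namespace Aux19

open ArithmeticFunction in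
/-- partial sums of the nontrivial character mod 4 -/
def gch (m : ℕ) : ℤ := ∑ k ∈ Finset.Icc 1 m, ZMod.χ₄ (k : ZMod 4)

theorem gch_eq (m : ℕ) : gch m = if m % 4 = 1 ∨ m % 4 = 2 then 1 else 0 := by
  induction m with
  | zero => simp [gch]
  | succ n ih =>
    have : gch (n+1) = gch n + ZMod.χ₄ ((n+1 : ℕ) : ZMod 4) := by
      unfold gch; rw [Finset.sum_Icc_succ_top (by omega)]
    rw [this, ih, ZMod.χ₄_nat_mod_four]
    have h4 : n % 4 < 4 := Nat.mod_lt _ (by norm_num)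
    have h5 : (n+1) % 4 = (n % 4 + 1) % 4 := by omega
    rw [h5]
    generalize n % 4 = r at *
    interval_cases r <;> decide

/-- general Dirichlet hyperbola identity for a completely multiplicative weight -/
theorem sum_log_twist (c : ℕ → ℝ) (hc : ∀ a b, c (a*b) = c a * c b) (N : ℕ) :
    ∑ n ∈ Finset.Icc 1 N, c n * Real.log n =
      ∑ d ∈ Finset.Icc 1 N, ArithmeticFunction.vonMangoldt d * c d *
        ∑ k ∈ Finset.Icc 1 (N / d), c k := by
  have h1 : ∀ n ∈ Finset.Icc 1 N, c n * Real.log n =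
      ∑ d ∈ Finset.Icc 1 N, if d ∣ n then ArithmeticFunction.vonMangoldt d * c n else 0 := by
    intro n hn
    rw [Finset.mem_Icc] at hn
    rw [← ArithmeticFunction.vonMangoldt_sum, Finset.mul_sum, ← Finset.sum_filter]
    apply Finset.sum_congr_of_eq_on_inter
    · intro a ha hb
      exfalso; apply hb
      rw [Finset.mem_filter, Finset.mem_Icc]
      have := Nat.mem_divisors.1 ha
      exact ⟨⟨Nat.pos_of_dvd_of_pos this.1 (by omega), (Nat.le_of_dvd (by omega) this.1).trans hn.2⟩, this.1⟩
    · intro a ha hb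
      exfalso; apply hb
      rw [Finset.mem_filter] at ha
      exact Nat.mem_divisors.2 ⟨ha.2, by omega⟩
    · intro a _ _; ring
  rw [Finset.sum_congr rfl h1, Finset.sum_comm]
  apply Finset.sum_congr rfl
  intro d hd
  rw [Finset.mem_Icc] at hd
  rw [← Finset.sum_filter, Finset.mul_sum]
  symm
  apply Finset.sum_bij (fun k _ => d * k)
  · intro k hk
    rw [Finset.mem_Icc] at hk
    rw [Finset.mem_filter, Finset.mem_Icc]
    refine ⟨⟨Nat.mul_pos hd.1 hk.1, ?_⟩, dvd_mul_right _ _⟩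
    calc d * k ≤ d * (N / d) := Nat.mul_le_mul_left _ hk.2
      _ ≤ N := Nat.mul_div_le _ _
  · intro a _ b _ h
    exact Nat.eq_of_mul_eq_mul_left hd.1 h
  · intro b hb
    rw [Finset.mem_filter, Finset.mem_Icc] at hb
    obtain ⟨⟨h1, h2⟩, k, rfl⟩ := hb
    refine ⟨k, ?_, rfl⟩
    rw [Finset.mem_Icc]
    refine ⟨Nat.pos_of_ne_zero (by rintro rfl; simp at h1), ?_⟩
    rw [Nat.le_div_iff_mul_le hd.1, mul_comm]; exact h2
  · intro k _
    rw [hc]; ring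

/-- same, for N / j, with the range extended -/
theorem sum_log_twist_div (c : ℕ → ℝ) (hc : ∀ a b, c (a*b) = c a * c b) (N j : ℕ) :
    ∑ n ∈ Finset.Icc 1 (N / j), c n * Real.log n =
      ∑ d ∈ Finset.Icc 1 N, ArithmeticFunction.vonMangoldt d * c d *
        ∑ k ∈ Finset.Icc 1 (N / d / j), c k := by
  rw [sum_log_twist c hc]
  apply Finset.sum_subset_zero_on_sdiff
  · exact Finset.Icc_subset_Icc_right (Nat.div_le_self _ _)
  · intro d hd
    rw [Finset.mem_sdiff, Finset.mem_Icc, Finset.mem_Icc] at hd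
    have : N / d / j = 0 := by
      rw [Nat.div_div_eq_div_mul, mul_comm, ← Nat.div_div_eq_div_mul]
      exact Nat.div_eq_of_lt (by omega)
    rw [this]; simp
  · intro d _
    rw [Nat.div_div_eq_div_mul, Nat.div_div_eq_div_mul, mul_comm j d]

noncomputable def Tl (N : ℕ) : ℝ := ∑ n ∈ Finset.Icc 1 N, Real.log n
noncomputable def Sl (N : ℕ) : ℝ := ∑ n ∈ Finset.Icc 1 N, (ZMod.χ₄ (n : ZMod 4) : ℝ) * Real.log n

theorem Tl_div (N j : ℕ) : Tl (N / j) = ∑ d ∈ Finset.Icc 1 N, ArithmeticFunction.vonMangoldt d *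
    ((N / d / j : ℕ) : ℝ) := by
  have := sum_log_twist_div (fun _ => 1) (by simp) N j
  simpa [Tl] using this

theorem Sl_div (N j : ℕ) : Sl (N / j) = ∑ d ∈ Finset.Icc 1 N, ArithmeticFunction.vonMangoldt d *
    ((ZMod.χ₄ (d : ZMod 4) * gch (N / d / j) : ℤ) : ℝ) := by
  have := sum_log_twist_div (fun n => (ZMod.χ₄ (n : ZMod 4) : ℝ)) (by
    intro a b
    simp only [Nat.cast_mul, map_mul, Int.cast_mul]) N j
  unfold Sl
  rw [this]
  apply Finset.sum_congr rfl
  intro d _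
  unfold gch
  push_cast
  ring

theorem Sl_succ (n : ℕ) : Sl (n+1) = Sl n + (ZMod.χ₄ ((n + 1 : ℕ) : ZMod 4) : ℝ) * Real.log (n+1) := by
  unfold Sl; rw [Finset.sum_Icc_succ_top (by omega)]; push_cast; rfl

theorem Sl_four (k : ℕ) :
    Sl (4*k+1) = Sl (4*k) + Real.log (4*k+1) ∧ Sl (4*k+2) = Sl (4*k) + Real.log (4*k+1) ∧
    Sl (4*k+3) = Sl (4*k) + Real.log (4*k+1) - Real.log (4*k+3) ∧
    Sl (4*k+4) = Sl (4*k) + Real.log (4*k+1) - Real.log (4*k+3) := by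
  have e1 := Sl_succ (4*k)
  have e2 := Sl_succ (4*k+1)
  have e3 := Sl_succ (4*k+2)
  have e4 := Sl_succ (4*k+3)
  have m1 : (4*k+1) % 4 = 1 := by omega
  have m2 : (4*k+1+1) % 4 = 2 := by omega
  have m3 : (4*k+2+1) % 4 = 3 := by omega
  have m4 : (4*k+3+1) % 4 = 0 := by omega
  rw [ZMod.χ₄_nat_mod_four, m1] at e1
  rw [ZMod.χ₄_nat_mod_four, m2] at e2
  rw [ZMod.χ₄_nat_mod_four, m3] at e3
  rw [ZMod.χ₄_nat_mod_four, m4] at e4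
  have c1 : ZMod.χ₄ ((1:ℕ) : ZMod 4) = 1 := by decide
  have c2 : ZMod.χ₄ ((2:ℕ) : ZMod 4) = 0 := by decide
  have c3 : ZMod.χ₄ ((3:ℕ) : ZMod 4) = -1 := by decide
  have c4 : ZMod.χ₄ ((0:ℕ) : ZMod 4) = 0 := by decide
  rw [c1] at e1
  rw [c2] at e2
  rw [c3] at e3
  rw [c4] at e4
  push_cast at e1 e2 e3 e4
  have h3 : (4*(k:ℝ)+2+1) = 4*k+3 := by ring
  rw [h3] at e3
  refine ⟨by linarith, by linarith, by linarith, by linarith⟩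

theorem Sl_four_bd (k : ℕ) : -Real.log (4*k+1) ≤ Sl (4*k) ∧ Sl (4*k) ≤ 0 := by
  induction k with
  | zero => simp [Sl]
  | succ k ih =>
    have h := (Sl_four k).2.2.2
    have e : 4*(k+1) = 4*k+4 := by ring
    rw [e, h]
    have l1 : Real.log (4*k+1) ≤ Real.log (4*k+3) := Real.log_le_log (by positivity) (by linarith)
    have l2 : Real.log (4*k+3) ≤ Real.log (4*((k+1:ℕ):ℝ)+1) :=
      Real.log_le_log (by positivity) (by push_cast; linarith)
    constructor <;> linarith [ih.1, ih.2]

theorem Sl_bd (N : ℕ) : |Sl N| ≤ Real.log (N+1) := by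
  obtain ⟨k, r, hr, rfl⟩ : ∃ k r, r < 4 ∧ N = 4*k+r := ⟨N/4, N%4, Nat.mod_lt _ (by norm_num), by omega⟩
  have h0 := Sl_four_bd k
  obtain ⟨h1, h2, h3, h4⟩ := Sl_four k
  have l0 : 0 ≤ Real.log (4*k+1) := Real.log_nonneg (by linarith [(Nat.cast_nonneg k : (0:ℝ) ≤ k)])
  have l1 : Real.log (4*k+1) ≤ Real.log (4*k+3) := Real.log_le_log (by positivity) (by linarith)
  have l2 : Real.log (4*k+1) ≤ Real.log (4*k+1+1) := Real.log_le_log (by positivity) (by linarith)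
  have l3 : Real.log (4*k+1) ≤ Real.log (4*k+2+1) := Real.log_le_log (by positivity) (by linarith)
  have l4 : Real.log (4*k+3) ≤ Real.log (4*k+3+1) := Real.log_le_log (by positivity) (by linarith)
  interval_cases r
  · rw [abs_le]; push_cast; simp only [add_zero]; constructor <;> linarith
  · rw [abs_le, h1]; push_cast; constructor <;> linarith
  · rw [abs_le, h2]; push_cast; constructor <;> linarith
  · rw [abs_le, h3]; push_cast; constructor <;> linarith

theorem Tl_succ (n : ℕ) : Tl (n+1) = Tl n + Real.log (n+1) := by
  unfold Tl; rw [Finset.sum_Icc_succ_top (by omega)]; push_cast; rfl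

theorem Tl_bd (n : ℕ) (hn : 1 ≤ n) : n * Real.log n - n ≤ Tl n ∧ Tl n ≤ n * Real.log n - n + Real.log n + 1 := by
  induction n, hn using Nat.le_induction with
  | base => simp [Tl]
  | succ n hn ih =>
    rw [Tl_succ]
    push_cast
    have hp : (0:ℝ) < n := by exact_mod_cast hn
    have a1 : Real.log (n+1) - Real.log n ≤ 1 / n := by
      rw [← Real.log_div (by positivity) (by positivity)]
      refine (Real.log_le_sub_one_of_pos (by positivity)).trans (le_of_eq ?_)
      field_simp; ring
    have a2 : 1 / (n+1) ≤ Real.log (n+1) - Real.log n := by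
      have := Real.log_le_sub_one_of_pos (x := n / (n+1)) (by positivity)
      rw [Real.log_div (by positivity) (by positivity)] at this
      have e : (n:ℝ) / (n+1) - 1 = - (1/(n+1)) := by field_simp; ring
      linarith
    have b1 : n * (Real.log (n+1) - Real.log n) ≤ 1 := by
      calc _ ≤ n * (1/(n:ℝ)) := mul_le_mul_of_nonneg_left a1 hp.le
        _ = 1 := by field_simp
    have b2 : 1 ≤ (n+1) * (Real.log (n+1) - Real.log n) := by
      calc 1 = (n+1) * (1/((n:ℝ)+1)) := by field_simp
        _ ≤ _ := mul_le_mul_of_nonneg_left a2 (by positivity)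
    constructor <;> nlinarith [ih.1, ih.2]

theorem Tl_floor (N j : ℕ) (hj : 1 ≤ j) (hN : j ≤ N) :
    |Tl (N / j) - ((N:ℝ)/j * (Real.log N - Real.log j) - (N:ℝ)/j)| ≤ Real.log N + 1 := by
  set n := N / j with hn
  have hn1 : 1 ≤ n := (Nat.one_le_div_iff (by omega)).2 hN
  obtain ⟨t1, t2⟩ := Tl_bd n hn1
  have hjp : (0:ℝ) < j := by exact_mod_cast hj
  have hNp : (0:ℝ) < N := by exact_mod_cast (by omega : 0 < N)
  have hnp : (1:ℝ) ≤ n := by exact_mod_cast hn1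
  rw [← Real.log_div hNp.ne' hjp.ne']
  set y : ℝ := (N:ℝ)/j with hy
  have hny : (n:ℝ) ≤ y := Nat.cast_div_le
  have hyn : y < n + 1 := by
    rw [hy, div_lt_iff₀ hjp]
    have : N < (n+1) * j := by
      rw [add_mul, one_mul, hn, mul_comm]
      exact Nat.lt_mul_div_succ N hj |>.trans_le (by rw [mul_add, mul_one])
    exact_mod_cast this
  have hyN : y ≤ N := div_le_self hNp.le (by exact_mod_cast hj)
  have ly : Real.log y ≤ Real.log N := Real.log_le_log (by linarith) hyN
  have l0 : 0 ≤ Real.log y := Real.log_nonneg (by linarith)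
  have lny : Real.log n ≤ Real.log y := Real.log_le_log (by linarith) hny
  have key : n * (Real.log y - Real.log n) ≤ y - n := by
    rw [← Real.log_div (by linarith) (by linarith)]
    have := Real.log_le_sub_one_of_pos (x := y / n) (div_pos (by linarith) (by linarith))
    calc n * Real.log (y/n) ≤ n * (y/n - 1) := mul_le_mul_of_nonneg_left this (by linarith)
      _ = y - n := by field_simp
  rw [abs_le]
  constructor
  · have : (y - n) * Real.log y ≤ 1 * Real.log y := mul_le_mul_of_nonneg_right (by linarith) l0
    nlinarith
  · have : n * Real.log n - n ≤ y * Real.log y - y := by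
      -- monotone
      have := Real.log_le_sub_one_of_pos (x := n / y) (div_pos (by linarith) (by linarith))
      rw [Real.log_div (by linarith) (by linarith)] at this
      have h2 : y * (Real.log n - Real.log y) ≤ n - y := by
        calc _ ≤ y * (n/y - 1) := mul_le_mul_of_nonneg_left this (by linarith)
          _ = n - y := by
              have : y ≠ 0 := by linarith
              rw [mul_sub, mul_one, mul_div_cancel₀ _ this]
      have l00 : 0 ≤ Real.log n := Real.log_nonneg hnp
      nlinarith [mul_nonneg (sub_nonneg.2 hny) l00]
    linarith

def Ew (n : ℕ) : ℤ := 2 * n - 4 * (n / 2 : ℕ) - 2 * (n / 3 : ℕ) + 4 * (n / 6 : ℕ)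
def Gw (n : ℕ) : ℤ := 2 * gch n - 2 * gch (n / 2) + 2 * gch (n / 3) - gch (n / 6)
def slk (n : ℕ) : ℤ := (if 5 ≤ n then 2 else 0) + (if 6 ≤ n then 1 else 0) + (if 25 ≤ n then 1 else 0)

theorem EG_bd (n : ℕ) (hn : 1 ≤ n) :
    Ew n + Gw n ≤ (if n = 1 then 4 else 0) + slk n ∧ Ew n - Gw n ≤ slk n ∧
    Ew n ≤ (if n = 1 then 4 else 0) + slk n := by
  obtain ⟨k, r, hr, rfl⟩ : ∃ k r, r < 24 ∧ n = 24*k+r := ⟨n/24, n%24, Nat.mod_lt _ (by norm_num), by omega⟩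
  have hE : Ew (24*k+r) = Ew r := by unfold Ew; push_cast; omega
  have hG : Gw (24*k+r) = Gw r := by
    unfold Gw
    simp only [gch_eq]
    have h1 : (24*k+r) % 4 = r % 4 := by omega
    have h2 : (24*k+r) / 2 % 4 = r / 2 % 4 := by omega
    have h3 : (24*k+r) / 3 % 4 = r / 3 % 4 := by omega
    have h6 : (24*k+r) / 6 % 4 = r / 6 % 4 := by omega
    rw [h1, h2, h3, h6]
  rw [hE, hG]
  rcases Nat.eq_zero_or_pos k with rfl | hk
  · interval_cases r <;> simp [Ew, Gw, slk, gch_eq] at *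
  · rcases Nat.eq_zero_or_pos r with rfl | hr0
    · have hs : 0 ≤ slk (24*k+0) := by
        unfold slk; positivity
      rw [if_neg (by omega)]
      simpa [Ew, Gw, gch_eq] using hs
    · have hs : slk (24*k+r) = 4 := by
        unfold slk; rw [if_pos (by omega), if_pos (by omega), if_pos (by omega)]; norm_num
      rw [hs, if_neg (by omega)]
      clear hE hG hs hn
      interval_cases r <;> simp [Ew, Gw, gch_eq]

end Aux19

namespace Aux19

theorem comb_eq (N : ℕ) :
    2 * Tl N - 4 * Tl (N/2) - 2 * Tl (N/3) + 4 * Tl (N/6) +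
      (2 * Sl N - 2 * Sl (N/2) + 2 * Sl (N/3) - Sl (N/6)) =
    ∑ d ∈ Finset.Icc 1 N, ArithmeticFunction.vonMangoldt d *
      ((Ew (N/d) + ZMod.χ₄ (d : ZMod 4) * Gw (N/d) : ℤ) : ℝ) := by
  have t1 := Tl_div N 1
  have t2 := Tl_div N 2
  have t3 := Tl_div N 3
  have t6 := Tl_div N 6
  have s1 := Sl_div N 1
  have s2 := Sl_div N 2
  have s3 := Sl_div N 3
  have s6 := Sl_div N 6
  simp only [Nat.div_one] at t1 s1
  rw [t1, t2, t3, t6, s1, s2, s3, s6]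
  simp only [Finset.mul_sum]
  simp only [← Finset.sum_add_distrib, ← Finset.sum_sub_distrib]
  apply Finset.sum_congr rfl
  intro d _
  unfold Ew Gw
  generalize N / d = n
  generalize n / 2 = n2
  generalize n / 3 = n3
  generalize n / 6 = n6
  push_cast
  ring

theorem psi_nat (N : ℕ) (j : ℕ) (hj : 1 ≤ j) : ∑ d ∈ Finset.Icc 1 N, ArithmeticFunction.vonMangoldt d *
    (if j ≤ N / d then (1:ℝ) else 0) ≤ Chebyshev.psi ((N:ℝ) / j) := by
  rw [Chebyshev.psi_eq_sum_Icc]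
  simp only [mul_ite, mul_one, mul_zero]
  rw [← Finset.sum_filter]
  apply Finset.sum_le_sum_of_subset_of_nonneg
  · intro d hd
    rw [Finset.mem_filter, Finset.mem_Icc] at hd
    rw [Finset.mem_Icc]
    refine ⟨by omega, ?_⟩
    rw [Nat.floor_div_natCast, Nat.floor_natCast, Nat.le_div_iff_mul_le (by omega)]
    rw [Nat.le_div_iff_mul_le (by omega), mul_comm] at hd
    exact hd.2
  · intros; exact ArithmeticFunction.vonMangoldt_nonneg

theorem main_ineq (N : ℕ) (hN : 6 ≤ N) :
    (4/3) * Real.log 2 * N - 20 * (Real.log (N+1) + 1) ≤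
      4 * ∑ d ∈ (Finset.Icc 1 N).filter (fun d => N / d = 1 ∧ d % 4 ≠ 3), ArithmeticFunction.vonMangoldt d
      + 2 * Chebyshev.psi ((N:ℝ)/(5:ℕ)) + Chebyshev.psi ((N:ℝ)/(6:ℕ)) + Chebyshev.psi ((N:ℝ)/(25:ℕ)) := by
  have hub : ∑ d ∈ Finset.Icc 1 N, ArithmeticFunction.vonMangoldt d *
      ((Ew (N/d) + ZMod.χ₄ (d : ZMod 4) * Gw (N/d) : ℤ) : ℝ) ≤
      4 * ∑ d ∈ (Finset.Icc 1 N).filter (fun d => N / d = 1 ∧ d % 4 ≠ 3), ArithmeticFunction.vonMangoldt d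
      + 2 * Chebyshev.psi ((N:ℝ)/(5:ℕ)) + Chebyshev.psi ((N:ℝ)/(6:ℕ)) + Chebyshev.psi ((N:ℝ)/(25:ℕ)) := by
    have q5 := psi_nat N 5 (by norm_num)
    have q6 := psi_nat N 6 (by norm_num)
    have q25 := psi_nat N 25 (by norm_num)
    have hpt : ∑ d ∈ Finset.Icc 1 N, ArithmeticFunction.vonMangoldt d *
      ((Ew (N/d) + ZMod.χ₄ (d : ZMod 4) * Gw (N/d) : ℤ) : ℝ) ≤
      ∑ d ∈ Finset.Icc 1 N, (4 * (if N / d = 1 ∧ d % 4 ≠ 3 then ArithmeticFunction.vonMangoldt d else 0)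
        + 2 * (ArithmeticFunction.vonMangoldt d * (if 5 ≤ N / d then (1:ℝ) else 0))
        + (ArithmeticFunction.vonMangoldt d * (if 6 ≤ N / d then (1:ℝ) else 0))
        + (ArithmeticFunction.vonMangoldt d * (if 25 ≤ N / d then (1:ℝ) else 0))) := by
      apply Finset.sum_le_sum
      intro d hd
      rw [Finset.mem_Icc] at hd
      have hn : 1 ≤ N / d := (Nat.one_le_div_iff (by omega)).2 hd.2
      obtain ⟨b1, b2, b3⟩ := EG_bd _ hn
      have key : (Ew (N/d) + ZMod.χ₄ (d : ZMod 4) * Gw (N/d) : ℤ) ≤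
          (if N / d = 1 ∧ d % 4 ≠ 3 then 4 else 0) + slk (N/d) := by
        rw [ZMod.χ₄_nat_mod_four]
        have h4 : d % 4 < 4 := Nat.mod_lt _ (by norm_num)
        have c1 : ZMod.χ₄ ((1:ℕ) : ZMod 4) = 1 := by decide
        have c2 : ZMod.χ₄ ((2:ℕ) : ZMod 4) = 0 := by decide
        have c3 : ZMod.χ₄ ((3:ℕ) : ZMod 4) = -1 := by decide
        have c4 : ZMod.χ₄ ((0:ℕ) : ZMod 4) = 0 := by decide
        generalize d % 4 = r at *
        interval_cases r
        · rw [c4]; simpa using b3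
        · rw [c1]; simpa using b1
        · rw [c2]; simpa using b3
        · rw [c3]; simp; linarith
      have key' : ((Ew (N/d) + ZMod.χ₄ (d : ZMod 4) * Gw (N/d) : ℤ) : ℝ) ≤
          (((if N / d = 1 ∧ d % 4 ≠ 3 then 4 else 0) + slk (N/d) : ℤ) : ℝ) := by exact_mod_cast key
      refine (mul_le_mul_of_nonneg_left key' ArithmeticFunction.vonMangoldt_nonneg).trans (le_of_eq ?_)
      unfold slk
      push_cast
      split_ifs <;> ring
    refine hpt.trans ?_
    rw [Finset.sum_add_distrib, Finset.sum_add_distrib, Finset.sum_add_distrib, ← Finset.mul_sum,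
      ← Finset.mul_sum, ← Finset.sum_filter]
    linarith
  rw [← comb_eq] at hub
  refine le_trans ?_ hub
  have t1 := abs_le.1 (Tl_floor N 1 (by norm_num) (by omega))
  have t2 := abs_le.1 (Tl_floor N 2 (by norm_num) (by omega))
  have t3 := abs_le.1 (Tl_floor N 3 (by norm_num) (by omega))
  have t6 := abs_le.1 (Tl_floor N 6 (by norm_num) (by omega))
  have sm : ∀ j, |Sl (N/j)| ≤ Real.log (N+1) := fun j => (Sl_bd _).trans
    (Real.log_le_log (by positivity) (by
      have : ((N/j:ℕ):ℝ) ≤ N := by exact_mod_cast Nat.div_le_self _ _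
      linarith))
  have s1 := abs_le.1 (sm 1)
  have s2 := abs_le.1 (sm 2)
  have s3 := abs_le.1 (sm 3)
  have s6 := abs_le.1 (sm 6)
  rw [Nat.div_one] at t1 s1
  have hNp : (0:ℝ) < N := by exact_mod_cast (by omega : 0 < N)
  have ll : Real.log N ≤ Real.log (N+1) := Real.log_le_log hNp (by linarith)
  have l6 : Real.log 6 = Real.log 2 + Real.log 3 := by
    rw [← Real.log_mul (by norm_num) (by norm_num)]; norm_num
  push_cast at t1 t2 t3 t6
  rw [l6] at t6
  rw [Real.log_one] at t1
  have eqn : 2 * ((N:ℝ)/1 * (Real.log N - 0) - (N:ℝ)/1) - 4 * ((N:ℝ)/2 * (Real.log N - Real.log 2) - (N:ℝ)/2)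
    - 2 * ((N:ℝ)/3 * (Real.log N - Real.log 3) - (N:ℝ)/3) + 4 * ((N:ℝ)/6 * (Real.log N - (Real.log 2 + Real.log 3)) - (N:ℝ)/6)
     = (4/3) * Real.log 2 * N := by ring
  linarith [t1.1, t2.2, t3.2, t6.1, s1.1, s2.2, s3.1, s6.2]

/-- primes 1 mod 4 in (N/2, N] -/
def P1 (N : ℕ) : Finset ℕ := (Finset.Icc 1 N).filter (fun p => p.Prime ∧ p % 4 = 1 ∧ N < 2 * p)

theorem lam_le (N : ℕ) (hN : 6 ≤ N) :
    ∑ d ∈ (Finset.Icc 1 N).filter (fun d => N / d = 1 ∧ d % 4 ≠ 3), ArithmeticFunction.vonMangoldt d ≤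
    (P1 N).card * Real.log N + 2 * √N * Real.log N := by
  have hN1 : (1:ℝ) ≤ N := by exact_mod_cast (by omega : 1 ≤ N)
  have h1 := Chebyshev.psi_sub_theta_le hN1
  rw [Chebyshev.psi_sub_theta_eq_sum_not_prime] at h1
  have h2 : ∑ p ∈ P1 N, ArithmeticFunction.vonMangoldt p ≤ (P1 N).card * Real.log N := by
    rw [← nsmul_eq_mul]
    apply Finset.sum_le_card_nsmul
    intro p hp
    unfold P1 at hp
    rw [Finset.mem_filter, Finset.mem_Icc] at hp
    exact ArithmeticFunction.vonMangoldt_le_log.trans (Real.log_le_log (by exact_mod_cast hp.1.1) (by exact_mod_cast hp.1.2))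
  refine le_trans ?_ (add_le_add h2 h1)
  rw [Nat.floor_natCast]
  rw [← Finset.sum_filter_add_sum_filter_not _ Nat.Prime]
  apply add_le_add
  · apply Finset.sum_le_sum_of_subset_of_nonneg
    · intro d hd
      simp only [Finset.mem_filter, Finset.mem_Icc] at hd
      obtain ⟨⟨⟨h1, h2⟩, h3, h4⟩, hp⟩ := hd
      have h5 : N < 2 * d := by
        have := Nat.lt_mul_div_succ N (by omega : 0 < d)
        rw [h3] at this; omega
      simp only [P1, Finset.mem_filter, Finset.mem_Icc]
      refine ⟨⟨h1, h2⟩, hp, ?_, h5⟩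
      have := hp.eq_two_or_odd
      omega
    · intros; exact ArithmeticFunction.vonMangoldt_nonneg
  · apply Finset.sum_le_sum_of_subset_of_nonneg
    · intro d hd
      simp only [Finset.mem_filter, Finset.mem_Icc] at hd
      simp only [Finset.mem_filter, Finset.mem_Ioc]
      exact ⟨⟨by omega, by omega⟩, hd.2⟩
    · intros; exact ArithmeticFunction.vonMangoldt_nonneg

theorem count_ineq (N : ℕ) (hN : 25 ≤ N) :
    (3/25) * Real.log 2 * N ≤ 4 * (P1 N).card * Real.log N + 40 * (√N * Real.log (N+1)) + 40 * Real.log (N+1)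
     := by
  have h1 := main_ineq N (by omega)
  have h2 := lam_le N (by omega)
  have hNp : (25:ℝ) ≤ N := by exact_mod_cast hN
  have hlog : Real.log N ≤ Real.log (N+1) := Real.log_le_log (by linarith) (by linarith)
  have hl1 : 1 ≤ Real.log (N+1) := by
    rw [Real.le_log_iff_exp_le (by linarith)]
    linarith [Real.exp_one_lt_d9]
  have l4 : Real.log 4 = 2 * Real.log 2 := by
    rw [show (4:ℝ) = 2^2 by norm_num, Real.log_pow]; norm_num
  have key : ∀ j : ℕ, 1 ≤ j → j ≤ N → Chebyshev.psi ((N:ℝ)/j) ≤ 2 * Real.log 2 * (N / j) + 2 * (√N * Real.log (N+1)) := by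
    intro j hj hjN
    have hj' : (1:ℝ) ≤ j := by exact_mod_cast hj
    have hq : 1 ≤ (N:ℝ)/j := by rw [le_div_iff₀ (by linarith)]; rw [one_mul]; exact_mod_cast hjN
    have hle : (N:ℝ)/j ≤ N := div_le_self (by linarith) hj'
    have := Chebyshev.psi_le hq
    rw [l4] at this
    have a : √((N:ℝ)/j) * Real.log ((N:ℝ)/j) ≤ √N * Real.log (N+1) := by
      apply mul_le_mul (Real.sqrt_le_sqrt hle) _ (Real.log_nonneg hq) (Real.sqrt_nonneg _)
      exact Real.log_le_log (by linarith) (by linarith)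
    linarith
  have k5 := key 5 (by norm_num) (by omega)
  have k6 := key 6 (by norm_num) (by omega)
  have k25 := key 25 (by norm_num) (by omega)
  have hs : √N * Real.log N ≤ √N * Real.log (N+1) := mul_le_mul_of_nonneg_left hlog (Real.sqrt_nonneg _)
  have hs0 : 0 ≤ √(N:ℝ) * Real.log (N+1) := mul_nonneg (Real.sqrt_nonneg _) (by linarith)
  push_cast at k5 k6 k25 h1
  have : 4 * ((P1 N).card * Real.log N) = 4 * (P1 N).card * Real.log N := by ring
  linarith

theorem P1_lower : ∃ N0 : ℕ, ∀ N : ℕ, N0 ≤ N → 2 ≤ N → (N:ℝ) / 1000 ≤ (P1 N).card * Real.log N := by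
  have hlit : (fun x : ℝ => √x * Real.log (x+1) + Real.log (x+1)) =o[Filter.atTop] (fun x : ℝ => x) := by
    have h0 : (fun x : ℝ => Real.log (x+1)) =o[Filter.atTop] (fun x : ℝ => x ^ (1/4:ℝ)) := by
      have a := (isLittleO_log_rpow_atTop (r := 1/4) (by norm_num)).comp_tendsto
        (Filter.tendsto_atTop_add_const_right Filter.atTop (1:ℝ) Filter.tendsto_id)
      refine a.trans_isBigO ?_
      apply Asymptotics.IsBigO.of_bound 2
      filter_upwards [Filter.eventually_ge_atTop (1:ℝ)] with x hx
      simp only [Function.comp, id]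
      rw [Real.norm_of_nonneg (by positivity), Real.norm_of_nonneg (by positivity)]
      calc (x+1)^(1/4:ℝ) ≤ (2*x)^(1/4:ℝ) := Real.rpow_le_rpow (by linarith) (by linarith) (by norm_num)
        _ = 2^(1/4:ℝ) * x^(1/4:ℝ) := Real.mul_rpow (by norm_num) (by linarith)
        _ ≤ 2 * x^(1/4:ℝ) := by
          gcongr
          calc (2:ℝ)^(1/4:ℝ) ≤ 2^(1:ℝ) := Real.rpow_le_rpow_of_exponent_le (by norm_num) (by norm_num)
            _ = 2 := by norm_num
    have hb : ∀ r : ℝ, r ≤ 1 → (fun x : ℝ => x ^ r) =O[Filter.atTop] (fun x : ℝ => x) := by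
      intro r hr
      apply Asymptotics.IsBigO.of_bound 1
      filter_upwards [Filter.eventually_ge_atTop (1:ℝ)] with x hx
      rw [Real.norm_of_nonneg (by positivity), Real.norm_of_nonneg (by positivity), one_mul]
      calc x ^ r ≤ x^(1:ℝ) := Real.rpow_le_rpow_of_exponent_le hx hr
        _ = x := Real.rpow_one x
    apply Asymptotics.IsLittleO.add
    · have h1 := (Asymptotics.isBigO_refl (fun x : ℝ => √x) Filter.atTop).mul_isLittleO h0
      refine h1.trans_isBigO (Asymptotics.IsBigO.trans ?_ (hb (3/4) (by norm_num)))
      apply Filter.EventuallyEq.isBigO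
      filter_upwards [Filter.eventually_gt_atTop (0:ℝ)] with x hx
      rw [Real.sqrt_eq_rpow, ← Real.rpow_add hx]; norm_num
    · exact h0.trans_isBigO (hb _ (by norm_num))
  have h2 := hlit.bound (show (0:ℝ) < 1/2000 by norm_num)
  have h3 := tendsto_natCast_atTop_atTop (R := ℝ) |>.eventually h2
  rw [Filter.eventually_atTop] at h3
  obtain ⟨a, ha⟩ := h3
  refine ⟨max a 25, fun N hN _ => ?_⟩
  have h4 := ha N (le_of_max_le_left hN)
  have h5 := count_ineq N (le_of_max_le_right hN)
  have h6 := (le_abs_self _).trans h4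
  rw [Real.norm_of_nonneg (by positivity)] at h6
  have h7 := Real.log_two_gt_d9
  have hNp : (0:ℝ) ≤ N := by positivity
  nlinarith

end Aux19

namespace Aux19

theorem norm_eq (q : GaussianInt) : (q.norm : ℝ) = (q.re:ℝ)^2 + (q.im:ℝ)^2 := by
  rw [Zsqrtd.norm_def]; push_cast; ring

theorem norm_le_gnorm (q : GaussianInt) : (q.norm : ℝ) ≤ 2 * gnorm q ^ 2 := by
  rw [norm_eq]
  have h1 : |(q.re:ℝ)| ≤ gnorm q := le_max_left _ _
  have h2 : |(q.im:ℝ)| ≤ gnorm q := le_max_right _ _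
  rw [← sq_abs (q.re:ℝ), ← sq_abs (q.im:ℝ)]
  nlinarith [abs_nonneg (q.re:ℝ), abs_nonneg (q.im:ℝ)]

theorem gnorm_le_norm (q : GaussianInt) : gnorm q ^ 2 ≤ (q.norm : ℝ) := by
  rw [norm_eq, ← sq_abs (q.re:ℝ), ← sq_abs (q.im:ℝ)]
  unfold gnorm
  rcases max_choice |(q.re:ℝ)| |(q.im:ℝ)| with h | h <;> rw [h] <;> nlinarith [sq_nonneg |(q.re:ℝ)|, sq_nonneg |(q.im:ℝ)|]

theorem gnorm_nonneg (q : GaussianInt) : 0 ≤ gnorm q := le_max_of_le_left (abs_nonneg _)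

theorem box_finite (M : ℝ) : {q : GaussianInt | gnorm q ≤ M}.Finite := by
  have : ((Set.Icc (-⌈M⌉) ⌈M⌉ ×ˢ Set.Icc (-⌈M⌉) ⌈M⌉).Finite) := (Set.finite_Icc _ _).prod (Set.finite_Icc _ _)
  refine (this.image (fun z : ℤ × ℤ => (⟨z.1, z.2⟩ : GaussianInt))).subset ?_
  intro q hq
  have h1 : |(q.re:ℝ)| ≤ M := (le_max_left _ _).trans hq
  have h2 : |(q.im:ℝ)| ≤ M := (le_max_right _ _).trans hq
  have hM := Int.le_ceil M
  rw [abs_le] at h1 h2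
  refine ⟨(q.re, q.im), ⟨⟨?_, ?_⟩, ⟨?_, ?_⟩⟩, rfl⟩
  · have : -(⌈M⌉:ℝ) ≤ q.re := by linarith
    exact_mod_cast this
  · have : (q.re:ℝ) ≤ ⌈M⌉ := by linarith
    exact_mod_cast this
  · have : -(⌈M⌉:ℝ) ≤ q.im := by linarith
    exact_mod_cast this
  · have : (q.im:ℝ) ≤ ⌈M⌉ := by linarith
    exact_mod_cast this

theorem PM_finite (M : ℝ) : (PM M).Finite := (box_finite M).subset fun _ hq => hq.2.2

theorem prime_of_norm (q : GaussianInt) (p : ℕ) (hp : p.Prime) (h : q.norm = p) : Prime q := by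
  rw [← irreducible_iff_prime]
  constructor
  · intro hu
    rw [← Zsqrtd.norm_eq_one_iff, h] at hu
    simp at hu
    exact hp.one_lt.ne' hu
  · intro a b hab
    have : p = a.norm.natAbs * b.norm.natAbs := by
      rw [← Int.natAbs_mul, ← Zsqrtd.norm_mul, ← hab, h]; simp
    rw [← Zsqrtd.norm_eq_one_iff, ← Zsqrtd.norm_eq_one_iff]
    rcases (Nat.prime_mul_iff.1 (this ▸ hp)) with h | h
    · exact Or.inr h.2
    · exact Or.inl h.2

theorem PM_card (M : ℝ) (hM : 4 ≤ M) : (P1 ⌊M^2⌋₊).card ≤ (PM M).ncard := by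
  have hex : ∀ p ∈ P1 ⌊M^2⌋₊, ∃ q ∈ PM M, q.norm = p := by
    intro p hp
    simp only [P1, Finset.mem_filter, Finset.mem_Icc] at hp
    obtain ⟨⟨h1, h2⟩, hpp, h4, h5⟩ := hp
    have : Fact p.Prime := ⟨hpp⟩
    obtain ⟨a, b, hab⟩ := Nat.Prime.sq_add_sq (p := p) (by omega)
    let q : GaussianInt := ⟨a, b⟩
    have hn : q.norm = p := by
      rw [Zsqrtd.norm_def, ← hab]; simp only [q]; push_cast; ring
    refine ⟨q, ⟨prime_of_norm q p hpp hn, ?_, ?_⟩, hn⟩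
    · have := norm_le_gnorm q
      rw [hn] at this
      have h6 : M^2 < 2 * p := by
        have := (Nat.floor_lt (by positivity)).1 h5
        exact_mod_cast this
      push_cast at this
      nlinarith [gnorm_nonneg q]
    · have := gnorm_le_norm q
      rw [hn] at this
      have h6 : (p:ℝ) ≤ M^2 := (Nat.le_floor_iff (by positivity)).1 h2
      push_cast at this
      nlinarith [gnorm_nonneg q]
  choose! f hf1 hf2 using hex
  rw [← Set.ncard_coe_finset]
  apply Set.ncard_le_ncard_of_injOn f hf1 _ (PM_finite M)
  intro a ha b hb hab
  have h1 := hf2 a ha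
  have h2 := hf2 b hb
  rw [hab, h2] at h1
  exact_mod_cast h1.symm

theorem norm_PM {M : ℝ} (hM : 4 ≤ M) {q : GaussianInt} (hq : q ∈ PM M) : M ≤ (q.norm : ℝ) := by
  have := gnorm_le_norm q
  have := hq.2.1
  nlinarith

theorem unit_cases (u : GaussianInt) (h : u.norm = 1) :
    u ∈ ({1, -1, ⟨0,1⟩, ⟨0,-1⟩} : Finset GaussianInt) := by
  rw [Zsqrtd.norm_def] at h
  have h1 : u.re * u.re + u.im * u.im = 1 := by linarith
  have h2 : -1 ≤ u.re := by nlinarith [mul_self_nonneg u.im]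
  have h3 : u.re ≤ 1 := by nlinarith [mul_self_nonneg u.im]
  have h4 : -1 ≤ u.im := by nlinarith [mul_self_nonneg u.re]
  have h5 : u.im ≤ 1 := by nlinarith [mul_self_nonneg u.re]
  obtain ⟨x, y⟩ := u
  simp only at *
  interval_cases x <;> interval_cases y <;> first | (exfalso; revert h1; norm_num; done) | decide

theorem div_count (M : ℝ) (hM : 4 ≤ M) : ∀ (n : ℕ) (ℓ : GaussianInt), ℓ ≠ 0 → ℓ.norm.natAbs = n →
    ({q | q ∈ PM M ∧ q ∣ ℓ}.ncard : ℝ) * Real.log M ≤ 4 * Real.log (ℓ.norm : ℝ) := by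
  intro n
  induction n using Nat.strong_induction_on with
  | _ n ih =>
    intro ℓ hℓ hn
    have hnn : ∀ z : GaussianInt, 0 ≤ z.norm := fun z => GaussianInt.norm_nonneg z
    have hpos : ∀ z : GaussianInt, z ≠ 0 → 1 ≤ z.norm := fun z hz => GaussianInt.norm_pos.2 hz
    have hlM : 0 ≤ Real.log M := Real.log_nonneg (by linarith)
    by_cases hne : ∃ q, q ∈ PM M ∧ q ∣ ℓ
    · obtain ⟨q, hq, ℓ', rfl⟩ := hne
      have hq0 : q ≠ 0 := left_ne_zero_of_mul hℓ
      have hl0 : ℓ' ≠ 0 := right_ne_zero_of_mul hℓ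
      have hqM := norm_PM hM hq
      have hq2 : 2 ≤ q.norm := by
        have : (2:ℝ) ≤ q.norm := by linarith
        exact_mod_cast this
      have hlt : ℓ'.norm.natAbs < n := by
        rw [← hn, Zsqrtd.norm_mul]
        have := hpos ℓ' hl0
        have h3 : ℓ'.norm < q.norm * ℓ'.norm := by nlinarith
        omega
      have ih' := ih _ hlt ℓ' hl0 rfl
      let U : Finset GaussianInt := {1, -1, ⟨0,1⟩, ⟨0,-1⟩}
      have hsub : {r | r ∈ PM M ∧ r ∣ q * ℓ'} ⊆ {r | r ∈ PM M ∧ r ∣ ℓ'} ∪ ↑(U.image (fun u => u * q)) := by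
        rintro r ⟨hr, hd⟩
        rcases hr.1.dvd_or_dvd hd with h | h
        · right
          have hass : Associated q r := ((hr.1.dvd_prime_iff_associated hq.1).1 h).symm
          obtain ⟨u, hu⟩ := hass
          rw [Finset.coe_image]
          refine ⟨u, ?_, (mul_comm _ _).trans hu⟩
          apply unit_cases
          have := (Zsqrtd.norm_eq_one_iff (x := (u:GaussianInt))).2 u.isUnit
          have := hnn (u:GaussianInt)
          omega
        · left; exact ⟨hr, h⟩
      have hcard : {r | r ∈ PM M ∧ r ∣ q * ℓ'}.ncard ≤ {r | r ∈ PM M ∧ r ∣ ℓ'}.ncard + 4 := by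
        refine (Set.ncard_le_ncard hsub (((PM_finite M).subset fun _ h => h.1).union (Finset.finite_toSet _))).trans ?_
        refine (Set.ncard_union_le _ _).trans ?_
        gcongr
        rw [Set.ncard_coe_finset]
        exact Finset.card_image_le.trans (by decide)
      have hcard' : ({r | r ∈ PM M ∧ r ∣ q * ℓ'}.ncard : ℝ) ≤ {r | r ∈ PM M ∧ r ∣ ℓ'}.ncard + 4 := by
        exact_mod_cast hcard
      have hl1 : (0:ℝ) < ℓ'.norm := by exact_mod_cast hpos ℓ' hl0
      rw [Zsqrtd.norm_mul]
      push_cast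
      rw [Real.log_mul (by linarith) (by linarith)]
      have : Real.log M ≤ Real.log q.norm := Real.log_le_log (by linarith) hqM
      nlinarith
    · have : {q | q ∈ PM M ∧ q ∣ ℓ} = ∅ := by
        ext q; simp only [Set.mem_ofPred_eq, Set.mem_empty_iff_false, iff_false]
        exact fun h => hne ⟨q, h⟩
      rw [this]
      simp only [Set.ncard_empty, Nat.cast_zero, zero_mul]
      have : (1:ℝ) ≤ ℓ.norm := by exact_mod_cast hpos ℓ hℓ
      have := Real.log_nonneg this
      linarith

theorem div_count' (M : ℝ) (hM : 4 ≤ M) (ℓ : GaussianInt) (hℓ : ℓ ≠ 0) (h2 : 2 ≤ gnorm ℓ) :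
    ({q | q ∈ PM M ∧ star q ∣ ℓ}.ncard : ℝ) * Real.log M ≤ 12 * Real.log (gnorm ℓ) := by
  have h1 := div_count M hM _ (star ℓ) (by simpa using hℓ) rfl
  have hs : {q | q ∈ PM M ∧ star q ∣ ℓ} = {q | q ∈ PM M ∧ q ∣ star ℓ} := by
    ext q
    simp only [Set.mem_ofPred_eq, and_congr_right_iff]
    intro _
    constructor
    · rintro ⟨k, hk⟩; exact ⟨star k, by rw [hk]; simp [mul_comm]⟩
    · rintro ⟨k, hk⟩; exact ⟨star k, by rw [← star_star ℓ, hk]; simp [mul_comm]⟩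
  rw [hs]
  refine h1.trans ?_
  rw [Zsqrtd.norm_conj]
  have h3 := norm_le_gnorm ℓ
  have h4 : (0:ℝ) < ℓ.norm := by exact_mod_cast GaussianInt.norm_pos.2 hℓ
  have h5 : Real.log ℓ.norm ≤ Real.log (gnorm ℓ ^ 3) := Real.log_le_log h4 (by nlinarith [sq_nonneg (gnorm ℓ)])
  rw [Real.log_pow] at h5
  push_cast at h5
  linarith

/-- The lower bound for the number of Gaussian primes. -/
theorem PM_lower : ∃ c : ℝ, 0 < c ∧ ∀ M : ℝ, 4 ≤ M → (PM M).ncard ≠ 0 →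
    c * M^2 ≤ (PM M).ncard * Real.log M := by
  obtain ⟨N0, h⟩ := P1_lower
  refine ⟨min (1/4000) (1/((N0:ℝ)+1)), by positivity, fun M hM hne => ?_⟩
  have hl1 : 1 ≤ Real.log M := by
    rw [Real.le_log_iff_exp_le (by linarith)]
    linarith [Real.exp_one_lt_d9]
  by_cases hN : N0 ≤ ⌊M^2⌋₊
  · have h2 : 2 ≤ ⌊M^2⌋₊ := Nat.le_floor (by push_cast; nlinarith)
    have h3 := h _ hN h2
    have h4 : M^2 < ⌊M^2⌋₊ + 1 := Nat.lt_floor_add_one _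
    have h6 : (⌊M^2⌋₊ : ℝ) ≤ M^2 := Nat.floor_le (by positivity)
    have h7 : Real.log ⌊M^2⌋₊ ≤ 2 * Real.log M := by
      have := Real.log_le_log (by exact_mod_cast (by omega : 0 < ⌊M^2⌋₊)) h6
      rwa [Real.log_pow] at this
    have h8 : ((P1 ⌊M^2⌋₊).card : ℝ) ≤ (PM M).ncard := by exact_mod_cast PM_card M hM
    have h9 : ((P1 ⌊M^2⌋₊).card : ℝ) * Real.log ⌊M^2⌋₊ ≤ (PM M).ncard * (2 * Real.log M) :=
      mul_le_mul h8 h7 (Real.log_natCast_nonneg _) (by positivity)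
    have h10 : min (1/4000) (1/((N0:ℝ)+1)) * M^2 ≤ 1/4000 * M^2 := by gcongr; exact min_le_left _ _
    have h11 : (2:ℝ) ≤ ⌊M^2⌋₊ := by exact_mod_cast h2
    nlinarith
  · have h4 : M^2 < ⌊M^2⌋₊ + 1 := Nat.lt_floor_add_one _
    have h5 : (⌊M^2⌋₊:ℝ) ≤ N0 := by exact_mod_cast (not_le.1 hN).le
    have h6 : (1:ℝ) ≤ (PM M).ncard := by exact_mod_cast Nat.one_le_iff_ne_zero.2 hne
    calc min (1/4000) (1/((N0:ℝ)+1)) * M^2 ≤ 1/((N0:ℝ)+1) * (N0 + 1) := by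
          gcongr
          · exact min_le_right _ _
          · linarith
      _ = 1 := by field_simp
      _ ≤ _ := by nlinarith

end Aux19

namespace Aux19

theorem usq_ae : unitSquare =ᵐ[volume] ZSpan.fundamentalDomain Complex.basisOneI := by
  have h1 : unitSquare = Complex.measurableEquivRealProd ⁻¹' (Set.Icc (0:ℝ) 1 ×ˢ Set.Icc (0:ℝ) 1) := by
    ext z; simp [unitSquare, Complex.measurableEquivRealProd_apply]; tauto
  have h2 : ZSpan.fundamentalDomain Complex.basisOneI =
      Complex.measurableEquivRealProd ⁻¹' (Set.Ico (0:ℝ) 1 ×ˢ Set.Ico (0:ℝ) 1) := by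
    ext z
    simp [ZSpan.mem_fundamentalDomain, Complex.measurableEquivRealProd_apply, Fin.forall_fin_two]
  rw [h1, h2]
  apply Complex.volume_preserving_equiv_real_prod.quasiMeasurePreserving.preimage_ae_eq
  exact Measure.set_prod_ae_eq Ico_ae_eq_Icc.symm Ico_ae_eq_Icc.symm

theorem usq_meas : MeasurableSet unitSquare := by
  have h1 : unitSquare = Complex.measurableEquivRealProd ⁻¹' (Set.Icc (0:ℝ) 1 ×ˢ Set.Icc (0:ℝ) 1) := by
    ext z; simp [unitSquare, Complex.measurableEquivRealProd_apply]; tauto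
  rw [h1]
  exact Complex.measurableEquivRealProd.measurable (measurableSet_Icc.prod measurableSet_Icc)

theorem mem_lat (g : ℂ) (hg : g ∈ Submodule.span ℤ (Set.range ⇑Complex.basisOneI)) :
    ∃ s : GaussianInt, toComplex s = g := by
  induction hg using Submodule.span_induction with
  | mem x hx =>
    obtain ⟨i, rfl⟩ := hx
    fin_cases i
    · exact ⟨1, by simp⟩
    · exact ⟨⟨0,1⟩, by simp [toComplex_def]⟩
  | zero => exact ⟨0, by simp⟩
  | add x y _ _ hx hy =>
    obtain ⟨a, rfl⟩ := hx
    obtain ⟨b, rfl⟩ := hy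
    exact ⟨a + b, by simp⟩
  | smul a x _ hx =>
    obtain ⟨b, rfl⟩ := hx
    exact ⟨a * b, by simp⟩

open Pointwise in
/-- Translation invariance of the integral of a periodic function over the unit square. -/
theorem shift_inv (H : ℂ → ℂ) (hH : ∀ (s : GaussianInt) x, H (x + toComplex s) = H x) (δ : ℂ) :
    ∫ x in unitSquare, H (x + δ) = ∫ x in unitSquare, H x := by
  rw [setIntegral_congr_set usq_ae, setIntegral_congr_set usq_ae]
  set D := ZSpan.fundamentalDomain Complex.basisOneI with hD
  have hd := ZSpan.isAddFundamentalDomain' Complex.basisOneI (volume : Measure ℂ)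
  rw [← hD] at hd
  have hd2 := hd.vadd_of_comm (G' := ℂ) δ
  haveI : Countable ↥(Submodule.span ℤ (Set.range ⇑Complex.basisOneI)).toAddSubgroup :=
    inferInstanceAs (Countable ↥(Submodule.span ℤ (Set.range ⇑Complex.basisOneI)))
  have h := hd.setIntegral_eq hd2 (f := H) (by
    intro g x
    obtain ⟨s, hs⟩ := mem_lat g.1 g.2
    have : g +ᵥ x = x + toComplex s := by rw [hs, add_comm]; rfl
    rw [this, hH])
  rw [h]
  have := (measurePreserving_add_right (volume : Measure ℂ) δ).setIntegral_preimage_emb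
    (measurableEmbedding_addRight δ) H (δ +ᵥ D)
  rw [← this]
  congr 2
  ext x
  rw [Set.mem_preimage, Set.mem_vadd_set]
  constructor
  · intro hx; exact ⟨x, hx, by simp [add_comm]⟩
  · rintro ⟨y, hy, hxy⟩
    have : y = x := by simpa [add_comm] using hxy
    rwa [← this]

instance gi_countable : Countable GaussianInt :=
  Function.Injective.countable (f := fun q : GaussianInt => (q.re, q.im)) (by
    intro a b h
    simp only [Prod.mk.injEq] at h
    exact Zsqrtd.ext h.1 h.2)

theorem int_count (R t : ℝ) (hR : 0 ≤ R) :
    (((Finset.Icc ⌈-R - t⌉ ⌊R - t⌋).card : ℕ) : ℝ) ≤ 2 * R + 1 := by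
  rw [Int.card_Icc]
  have h1 := Int.floor_le (R - t)
  have h2 := Int.le_ceil (-R - t)
  rcases le_total 0 (⌊R-t⌋ + 1 - ⌈-R-t⌉) with h | h
  · have : (((⌊R-t⌋ + 1 - ⌈-R-t⌉).toNat : ℤ) : ℝ) = ((⌊R-t⌋ + 1 - ⌈-R-t⌉ : ℤ) : ℝ) := by
      rw [Int.toNat_of_nonneg h]
    rw [Int.cast_natCast] at this
    rw [this]; push_cast; linarith
  · rw [Int.toNat_of_nonpos h]; simp; linarith

theorem lat_count (q : GaussianInt) (hq : q ≠ 0) (z : ℂ) :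
    ∑' r : GaussianInt, (unitSquare.indicator (fun _ => (1:ENNReal)) ((z + toComplex r) / toComplex q)) ≤
      ENNReal.ofReal (25 * Complex.normSq (toComplex q)) := by
  set Q := toComplex q with hQ
  set R : ℝ := 2 * ‖Q‖ with hR
  have hQ0 : Q ≠ 0 := by rw [hQ]; simpa using hq
  have hQ1 : 1 ≤ ‖Q‖ := by
    have h1 : (1:ℝ) ≤ q.norm := by exact_mod_cast GaussianInt.norm_pos.2 hq
    have h2 : ‖Q‖^2 = q.norm := by
      rw [← Complex.normSq_eq_norm_sq, hQ, GaussianInt.intCast_real_norm]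
    nlinarith [norm_nonneg Q]
  let A : Finset (ℤ × ℤ) := (Finset.Icc ⌈-R - z.re⌉ ⌊R - z.re⌋) ×ˢ (Finset.Icc ⌈-R - z.im⌉ ⌊R - z.im⌋)
  let B : Finset GaussianInt := A.map ⟨fun p => (⟨p.1, p.2⟩ : GaussianInt), by
    intro a b h
    have h1 := congrArg Zsqrtd.re h
    have h2 := congrArg Zsqrtd.im h
    exact Prod.ext h1 h2⟩
  have hB : ∀ r ∉ B, unitSquare.indicator (fun _ => (1:ENNReal)) ((z + toComplex r) / Q) = 0 := by
    intro r hr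
    apply Set.indicator_of_notMem
    intro hmem
    apply hr
    have hn : ‖z + toComplex r‖ ≤ R := by
      have h1 : ‖(z + toComplex r) / Q‖ ≤ 2 := by
        refine (Complex.norm_le_abs_re_add_abs_im _).trans ?_
        have := hmem.1
        have := hmem.2
        rw [abs_of_nonneg hmem.1.1, abs_of_nonneg hmem.2.1]
        linarith [hmem.1.2, hmem.2.2]
      rw [norm_div, div_le_iff₀ (by linarith)] at h1
      exact h1
    have hre := abs_le.1 ((Complex.abs_re_le_norm _).trans hn)
    have him := abs_le.1 ((Complex.abs_im_le_norm _).trans hn)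
    simp only [Complex.add_re, Complex.add_im, ← GaussianInt.intCast_re, ← GaussianInt.intCast_im] at hre him
    simp only [B, A, Finset.mem_map, Finset.mem_product, Finset.mem_Icc]
    refine ⟨(r.re, r.im), ⟨⟨?_, ?_⟩, ⟨?_, ?_⟩⟩, rfl⟩
    · exact Int.ceil_le.2 (by linarith)
    · exact Int.le_floor.2 (by linarith)
    · exact Int.ceil_le.2 (by linarith)
    · exact Int.le_floor.2 (by linarith)
  rw [tsum_eq_sum hB]
  have hle : ∑ r ∈ B, unitSquare.indicator (fun _ => (1:ENNReal)) ((z + toComplex r) / Q) ≤ B.card := by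
    calc _ ≤ ∑ r ∈ B, (1:ENNReal) := Finset.sum_le_sum fun r _ => by
          by_cases hr : (z + toComplex r) / Q ∈ unitSquare <;> simp [hr]
      _ = B.card := by simp
  refine hle.trans ?_
  rw [← ENNReal.ofReal_natCast]
  apply ENNReal.ofReal_le_ofReal
  simp only [B, A, Finset.card_map, Finset.card_product]
  push_cast
  have hR0 : 0 ≤ R := by positivity
  have a1 := int_count R z.re hR0
  have a2 := int_count R z.im hR0
  rw [Complex.normSq_eq_norm_sq]
  calc _ ≤ (2*R+1)*(2*R+1) := mul_le_mul a1 a2 (by positivity) (by positivity)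
    _ ≤ _ := by rw [hR]; nlinarith

theorem lint_mul (Q : ℂ) (hQ : Q ≠ 0) (F : ℂ → ENNReal) (hF : Measurable F) :
    ∫⁻ x, F (Q * x) = ENNReal.ofReal (Complex.normSq Q)⁻¹ * ∫⁻ x, F x := by
  have hdet : LinearMap.det (LinearMap.mulLeft ℝ Q) = Complex.normSq Q := by
    rw [← Algebra.norm_complex_apply, Algebra.norm_apply]; rfl
  have hpos : 0 < Complex.normSq Q := Complex.normSq_pos.2 hQ
  have h := Measure.map_linearMap_addHaar_eq_smul_addHaar (volume : Measure ℂ) (f := LinearMap.mulLeft ℝ Q)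
    (by rw [hdet]; exact hpos.ne')
  rw [hdet, abs_of_pos (inv_pos.2 hpos)] at h
  have hm : Measurable (⇑(LinearMap.mulLeft ℝ Q)) := by
    show Measurable (fun x => Q * x)
    fun_prop
  have h2 := lintegral_map (μ := volume) hF hm
  rw [h, lintegral_smul_measure] at h2
  simpa using h2.symm

theorem unfold_bd (q : GaussianInt) (hq : q ≠ 0) (w : ℂ → ENNReal) (hw : Measurable w) :
    ∫⁻ x in unitSquare, ∑' r : GaussianInt, w (toComplex q * x - toComplex r) ≤ 25 * ∫⁻ z, w z := by
  have hQ0 : toComplex q ≠ 0 := by simpa using hq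
  set Q := toComplex q with hQ
  have hpos : 0 < Complex.normSq Q := Complex.normSq_pos.2 hQ0
  have hind : Measurable (unitSquare.indicator (fun _ => (1:ENNReal))) := measurable_const.indicator usq_meas
  rw [lintegral_tsum (fun r => (by fun_prop : Measurable fun x => w (Q * x - toComplex r)).aemeasurable)]
  have h1 : ∀ r : GaussianInt, ∫⁻ x in unitSquare, w (Q * x - toComplex r) =
      ENNReal.ofReal (Complex.normSq Q)⁻¹ *
        ∫⁻ z, unitSquare.indicator (fun _ => (1:ENNReal)) ((z + toComplex r) / Q) * w z := by
    intro r
    rw [← lintegral_indicator usq_meas]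
    have e1 : ∀ x, unitSquare.indicator (fun x => w (Q * x - toComplex r)) x =
        (fun y => unitSquare.indicator (fun _ => (1:ENNReal)) (y / Q) * w (y - toComplex r)) (Q * x) := by
      intro x
      simp only [mul_div_cancel_left₀ _ hQ0]
      by_cases hx : x ∈ unitSquare <;> simp [hx]
    rw [lintegral_congr e1, lint_mul Q hQ0 (fun y => unitSquare.indicator (fun _ => (1:ENNReal)) (y / Q) * w (y - toComplex r)) (by fun_prop)]
    congr 1
    rw [← lintegral_add_right_eq_self _ (toComplex r)]
    simp
  rw [tsum_congr h1, ENNReal.tsum_mul_left, ← lintegral_tsum (fun r => (by fun_prop))]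
  simp only [ENNReal.tsum_mul_right]
  calc _ ≤ ENNReal.ofReal (Complex.normSq Q)⁻¹ * ∫⁻ z, ENNReal.ofReal (25 * Complex.normSq Q) * w z := by
        gcongr with z
        exact lat_count q hq z
    _ = 25 * ∫⁻ z, w z := by
      rw [lintegral_const_mul _ hw, ← mul_assoc, ← ENNReal.ofReal_mul (by positivity)]
      congr 1
      rw [show (Complex.normSq Q)⁻¹ * (25 * Complex.normSq Q) = 25 by field_simp]
      norm_num
end Aux19

namespace Aux19

theorem ec_add (s t : ℝ) : ec (s + t) = ec s * ec t := by
  unfold ec; rw [← Complex.exp_add]; congr 1; push_cast; ring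

theorem ec_norm (t : ℝ) : ‖ec t‖ = 1 := by
  unfold ec
  have : (-2 * (Real.pi : ℂ) * Complex.I * t) = ((-2 * Real.pi * t : ℝ) : ℂ) * Complex.I := by push_cast; ring
  rw [this, Complex.norm_exp_ofReal_mul_I]

theorem ec_eq_one (t : ℝ) : ec t = 1 ↔ ∃ n : ℤ, t = n := by
  unfold ec
  rw [Complex.exp_eq_one_iff]
  have hpi : (2 * (Real.pi:ℂ) * Complex.I) ≠ 0 := Complex.two_pi_I_ne_zero
  constructor
  · rintro ⟨n, hn⟩
    refine ⟨-n, ?_⟩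
    have : (t:ℂ) = ((-n : ℤ) : ℂ) := by
      apply mul_left_cancel₀ hpi
      push_cast
      linear_combination -hn
    exact_mod_cast this
  · rintro ⟨n, rfl⟩
    exact ⟨-n, by push_cast; ring⟩

theorem ec_half : ec (1/2) = -1 := by
  unfold ec
  have : (-2 * (Real.pi : ℂ) * Complex.I * ((1/2 : ℝ) : ℂ)) = -(Real.pi * Complex.I) := by push_cast; ring
  rw [this, Complex.exp_neg, Complex.exp_pi_mul_I]; norm_num

theorem ec_cont (ξ : ℂ) : Continuous fun x => ec (inn ξ x) := by
  unfold ec inn; fun_prop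

theorem inn_add (ξ x y : ℂ) : inn ξ (x + y) = inn ξ x + inn ξ y := by
  simp [inn]; ring

noncomputable def per (ψ : ℂ → ℝ) (y : ℂ) : ℝ := ∑' r : GaussianInt, ψ (y - toComplex r)

theorem per_fin (ψ : ℂ → ℝ) (R : ℝ) (hR : ∀ z, ψ z ≠ 0 → ‖z‖ ≤ R) (y : ℂ) :
    (Function.support fun r : GaussianInt => ψ (y - toComplex r)).Finite := by
  refine (box_finite (R + ‖y‖)).subset ?_
  intro r hr
  have h1 := hR _ hr
  have h2 : ‖toComplex r‖ ≤ R + ‖y‖ := by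
    calc ‖toComplex r‖ = ‖y - (y - toComplex r)‖ := by congr 1; ring
      _ ≤ ‖y‖ + ‖y - toComplex r‖ := norm_sub_le _ _
      _ ≤ _ := by linarith
  show gnorm r ≤ _
  unfold gnorm
  rw [GaussianInt.intCast_re, GaussianInt.intCast_im]
  exact max_le ((Complex.abs_re_le_norm _).trans h2) ((Complex.abs_im_le_norm _).trans h2)

theorem per_summable (ψ : ℂ → ℝ) (R : ℝ) (hR : ∀ z, ψ z ≠ 0 → ‖z‖ ≤ R) (y : ℂ) :
    Summable fun r : GaussianInt => ψ (y - toComplex r) :=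
  summable_of_hasFiniteSupport (per_fin ψ R hR y)

theorem per_periodic (ψ : ℂ → ℝ) (y : ℂ) (s : GaussianInt) : per ψ (y + toComplex s) = per ψ y := by
  unfold per
  rw [← (Equiv.addRight s).tsum_eq]
  apply tsum_congr
  intro r
  simp

theorem per_ofReal (ψ : ℂ → ℝ) (h0 : ∀ z, 0 ≤ ψ z) (R : ℝ) (hR : ∀ z, ψ z ≠ 0 → ‖z‖ ≤ R) (y : ℂ) :
    ENNReal.ofReal (per ψ y) = ∑' r : GaussianInt, ENNReal.ofReal (ψ (y - toComplex r)) :=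
  ENNReal.ofReal_tsum_of_nonneg (fun _ => h0 _) (per_summable ψ R hR y)

theorem per_nonneg (ψ : ℂ → ℝ) (h0 : ∀ z, 0 ≤ ψ z) (y : ℂ) : 0 ≤ per ψ y :=
  tsum_nonneg fun _ => h0 _

theorem per_meas (ψ : ℂ → ℝ) (hc : Continuous ψ) (h0 : ∀ z, 0 ≤ ψ z) (R : ℝ)
    (hR : ∀ z, ψ z ≠ 0 → ‖z‖ ≤ R) : Measurable (per ψ) := by
  have : per ψ = fun y => (∑' r : GaussianInt, ENNReal.ofReal (ψ (y - toComplex r))).toReal := by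
    ext y
    rw [← per_ofReal ψ h0 R hR, ENNReal.toReal_ofReal (per_nonneg ψ h0 y)]
  rw [this]
  have hm := hc.measurable
  refine Measurable.ennreal_toReal (Measurable.tsum fun r => ?_)
  fun_prop

theorem cs_of (ψ : ℂ → ℝ) (R : ℝ) (hR : ∀ z, ψ z ≠ 0 → ‖z‖ ≤ R) : HasCompactSupport ψ := by
  apply HasCompactSupport.of_support_subset_isCompact (isCompact_closedBall (0:ℂ) R)
  intro z hz
  simpa using hR z hz

theorem per_int (ψ : ℂ → ℝ) (hc : Continuous ψ) (h0 : ∀ z, 0 ≤ ψ z) (R : ℝ)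
    (hR : ∀ z, ψ z ≠ 0 → ‖z‖ ≤ R) (q : GaussianInt) (hq : q ≠ 0) (h : ℂ) :
    IntegrableOn (fun x => per ψ (toComplex q * x + h)) unitSquare volume := by
  have hm := per_meas ψ hc h0 R hR
  have hcm := hc.measurable
  refine ⟨(by fun_prop : Measurable fun x => per ψ (toComplex q * x + h)).aestronglyMeasurable, ?_⟩
  unfold HasFiniteIntegral
  have e : ∀ x, ‖per ψ (toComplex q * x + h)‖ₑ =
      ∑' r : GaussianInt, (fun z => ENNReal.ofReal (ψ (z + h))) (toComplex q * x - toComplex r) := by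
    intro x
    rw [Real.enorm_of_nonneg (per_nonneg ψ h0 _), per_ofReal ψ h0 R hR]
    apply tsum_congr; intro r; congr 2; ring
  rw [lintegral_congr e]
  refine (unfold_bd q hq (fun z => ENNReal.ofReal (ψ (z + h))) (by fun_prop)).trans_lt ?_
  rw [lintegral_add_right_eq_self (fun z => ENNReal.ofReal (ψ z)) h]
  have hi : Integrable ψ := hc.integrable_of_hasCompactSupport (cs_of ψ R hR)
  rw [← ofReal_integral_eq_lintegral_ofReal hi (Filter.Eventually.of_forall h0)]
  exact ENNReal.mul_lt_top (by norm_num) ENNReal.ofReal_lt_top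

theorem per_diff (ψ : ℂ → ℝ) (hc : Continuous ψ) (h0 : ∀ z, 0 ≤ ψ z) (R : ℝ)
    (hR : ∀ z, ψ z ≠ 0 → ‖z‖ ≤ R) (q : GaussianInt) (hq : q ≠ 0) (h : ℂ) :
    ∫ x in unitSquare, |per ψ (toComplex q * x) - per ψ (toComplex q * x + h)| ≤
      25 * ∫ z, |ψ z - ψ (z + h)| := by
  have hcm := hc.measurable
  have hi : Integrable ψ := hc.integrable_of_hasCompactSupport (cs_of ψ R hR)
  have hi2 : Integrable (fun z => |ψ z - ψ (z + h)|) := (hi.sub (hi.comp_add_right h)).abs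
  have p1 := per_int ψ hc h0 R hR q hq 0
  simp only [add_zero] at p1
  have p2 := per_int ψ hc h0 R hR q hq h
  have p3 : IntegrableOn (fun x => |per ψ (toComplex q * x) - per ψ (toComplex q * x + h)|) unitSquare volume :=
    (p1.sub p2).abs
  have hn : 0 ≤ ∫ z, |ψ z - ψ (z + h)| := integral_nonneg fun _ => abs_nonneg _
  rw [← ENNReal.ofReal_le_ofReal_iff (by positivity),
    ofReal_integral_eq_lintegral_ofReal p3 (Filter.Eventually.of_forall fun _ => abs_nonneg _),
    ENNReal.ofReal_mul (by norm_num),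
    ofReal_integral_eq_lintegral_ofReal hi2 (Filter.Eventually.of_forall fun _ => abs_nonneg _)]
  have key := unfold_bd q hq (fun z => ENNReal.ofReal |ψ z - ψ (z + h)|) (by fun_prop)
  have e25 : ENNReal.ofReal 25 = 25 := by norm_num
  rw [e25]
  refine le_trans (lintegral_mono fun x => ?_) key
  have s1 := per_summable ψ R hR (toComplex q * x)
  have s2 := per_summable ψ R hR (toComplex q * x + h)
  have hs := (s1.sub s2).abs
  show ENNReal.ofReal |_| ≤ _
  have e : ∀ r : GaussianInt, |ψ (toComplex q * x - toComplex r) - ψ (toComplex q * x - toComplex r + h)| =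
      |ψ (toComplex q * x - toComplex r) - ψ (toComplex q * x + h - toComplex r)| := by
    intro r; congr 3; ring
  simp only [e]
  rw [← ENNReal.ofReal_tsum_of_nonneg (fun _ => abs_nonneg _) hs]
  apply ENNReal.ofReal_le_ofReal
  unfold per
  rw [← s1.tsum_sub s2]
  have := norm_tsum_le_tsum_norm (f := fun r : GaussianInt => ψ (toComplex q * x - toComplex r) - ψ (toComplex q * x + h - toComplex r)) hs
  simpa using this

noncomputable def cq (ψ : ℂ → ℝ) (q ℓ : GaussianInt) : ℂ :=
  ∫ x in unitSquare, ec (inn (toComplex ℓ) x) * (per ψ (toComplex q * x) : ℂ)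

theorem cq_shift (ψ : ℂ → ℝ) (q ℓ : GaussianInt) (δ : ℂ) :
    cq ψ q ℓ = ec (inn (toComplex ℓ) δ) *
      ∫ x in unitSquare, ec (inn (toComplex ℓ) x) * (per ψ (toComplex q * x + toComplex q * δ) : ℂ) := by
  unfold cq
  rw [← shift_inv (fun x => ec (inn (toComplex ℓ) x) * (per ψ (toComplex q * x) : ℂ)) ?_ δ,
    ← integral_const_mul]
  · apply integral_congr_ae
    refine Filter.Eventually.of_forall fun x => ?_
    simp only [inn_add, ec_add, mul_add]
    ring
  · intro s x
    have h1 : ec (inn (toComplex ℓ) (toComplex s)) = 1 := by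
      rw [ec_eq_one]
      refine ⟨ℓ.re * s.re + ℓ.im * s.im, ?_⟩
      simp [inn]
    simp only [inn_add, ec_add, h1, mul_add, mul_one, ← toComplex_mul, per_periodic]

theorem cq_zero (ψ : ℂ → ℝ) (q ℓ : GaussianInt) (hq : q ≠ 0) (hd : ¬ star q ∣ ℓ) : cq ψ q ℓ = 0 := by
  by_contra hne
  apply hd
  have hQ0 : toComplex q ≠ 0 := by simpa using hq
  have key : ∀ s : GaussianInt, ∃ n : ℤ, inn (toComplex ℓ) (toComplex s / toComplex q) = n := by
    intro s
    rw [← ec_eq_one]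
    have h := cq_shift ψ q ℓ (toComplex s / toComplex q)
    rw [mul_div_cancel₀ _ hQ0] at h
    simp only [per_periodic] at h
    change cq ψ q ℓ = _ * cq ψ q ℓ at h
    exact (mul_right_cancel₀ hne (by rw [one_mul]; exact h)).symm
  obtain ⟨m, hm⟩ := key 1
  obtain ⟨n, hn⟩ := key ⟨0, 1⟩
  have hI : toComplex (⟨0,1⟩ : GaussianInt) = Complex.I := by simp [toComplex_def]
  rw [hI] at hn
  rw [toComplex_one] at hm
  have hw : (starRingEnd ℂ) (toComplex ℓ) / toComplex q = toComplex ⟨m, -n⟩ := by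
    rw [div_eq_mul_inv]
    rw [one_div] at hm
    rw [div_eq_mul_inv] at hn
    apply Complex.ext
    · simp only [Complex.mul_re, Complex.conj_re, Complex.conj_im, re_toComplex]
      rw [← hm]; simp only [inn]; ring
    · simp only [Complex.mul_im, Complex.conj_re, Complex.conj_im, im_toComplex]
      push_cast
      rw [← hn]; simp [inn]; ring
  rw [div_eq_iff hQ0, ← toComplex_star, ← toComplex_mul, toComplex_inj] at hw
  refine ⟨star (⟨m, -n⟩ : GaussianInt), ?_⟩
  rw [← star_star ℓ, hw, star_mul]

theorem cq_bound (ψ : ℂ → ℝ) (hc : Continuous ψ) (h0 : ∀ z, 0 ≤ ψ z) (R : ℝ)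
    (hR : ∀ z, ψ z ≠ 0 → ‖z‖ ≤ R) (q ℓ : GaussianInt) (hq : q ≠ 0) (hℓ : ℓ ≠ 0) :
    ∃ h : ℂ, ‖h‖ = ‖toComplex q‖ / (2 * ‖toComplex ℓ‖) ∧
      2 * ‖cq ψ q ℓ‖ ≤ 25 * ∫ z, |ψ z - ψ (z + h)| := by
  set L := toComplex ℓ with hL
  have hL0 : L ≠ 0 := by rw [hL]; simpa using hℓ
  have hn : 0 < ‖L‖ := norm_pos_iff.2 hL0
  set t : ℝ := 1 / (2 * ‖L‖^2) with ht
  have ht0 : 0 < t := by positivity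
  set δ : ℂ := (t:ℂ) * L with hδ
  have hinn : inn L δ = 1/2 := by
    have : ‖L‖^2 = L.re^2 + L.im^2 := by
      rw [← Complex.normSq_eq_norm_sq, Complex.normSq_apply]; ring
    have h2 : inn L δ = t * ‖L‖^2 := by
      rw [this]; simp [inn, hδ]; ring
    rw [h2, ht]; field_simp
  refine ⟨toComplex q * δ, ?_, ?_⟩
  · rw [norm_mul, hδ, norm_mul, Complex.norm_real, Real.norm_of_nonneg ht0.le, ht]
    field_simp
  have hs := cq_shift ψ q ℓ δ
  rw [← hL, hinn, ec_half] at hs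
  set h := toComplex q * δ with hh
  have p1 := per_int ψ hc h0 R hR q hq 0
  simp only [add_zero] at p1
  have p2 := per_int ψ hc h0 R hR q hq h
  have mul_int : ∀ f : ℂ → ℝ, IntegrableOn f unitSquare volume →
      IntegrableOn (fun x => ec (inn L x) * (f x : ℂ)) unitSquare volume := by
    intro f hf
    refine Integrable.bdd_mul (c := 1) (Integrable.ofReal hf) (ec_cont L).aestronglyMeasurable ?_
    exact Filter.Eventually.of_forall fun x => (ec_norm _).le
  have e : 2 * cq ψ q ℓ = ∫ x in unitSquare, ec (inn L x) *
      ((per ψ (toComplex q * x) - per ψ (toComplex q * x + h) : ℝ) : ℂ) := by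
    have : ∫ x in unitSquare, ec (inn L x) *
      ((per ψ (toComplex q * x) - per ψ (toComplex q * x + h) : ℝ) : ℂ) =
      (∫ x in unitSquare, ec (inn L x) * (per ψ (toComplex q * x) : ℂ)) -
      ∫ x in unitSquare, ec (inn L x) * (per ψ (toComplex q * x + h) : ℂ) := by
      rw [← integral_sub (mul_int _ p1) (mul_int _ p2)]
      congr 1; ext x; push_cast; ring
    rw [this]
    change _ = cq ψ q ℓ - _
    linear_combination hs
  have e2 : 2 * ‖cq ψ q ℓ‖ = ‖2 * cq ψ q ℓ‖ := by simp
  rw [e2, e]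
  refine le_trans ?_ (per_diff ψ hc h0 R hR q hq h)
  refine (norm_integral_le_integral_norm _).trans (le_of_eq ?_)
  congr 1; ext x
  rw [norm_mul, ec_norm, one_mul, Complex.norm_real, Real.norm_eq_abs]

theorem phi_L1 (φ : ℂ → ℝ) (hφ : ContDiff ℝ 1 φ) (R : ℝ) (hR : ∀ z, φ z ≠ 0 → ‖z‖ ≤ R) :
    ∃ L : ℝ, 0 ≤ L ∧ ∀ h : ℂ, ∫ y, |φ y - φ (y + h)| ≤ L * min 1 ‖h‖ := by
  have hcs := cs_of φ R hR
  have hc := hφ.continuous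
  obtain ⟨C, hC⟩ := hφ.lipschitzWith_of_hasCompactSupport hcs one_ne_zero
  have hi : Integrable φ := hc.integrable_of_hasCompactSupport hcs
  set V : ℝ := (volume : Measure ℂ).real (Metric.closedBall 0 (R+1)) with hV
  have hV0 : 0 ≤ V := measureReal_nonneg
  set I1 : ℝ := ∫ y, |φ y| with hI1
  have hI10 : 0 ≤ I1 := integral_nonneg fun _ => abs_nonneg _
  refine ⟨2 * I1 + C * V, by positivity, fun h => ?_⟩
  have hi2 : Integrable (fun y => φ y - φ (y + h)) := hi.sub (hi.comp_add_right h)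
  rcases le_total ‖h‖ 1 with h1 | h1
  · rw [min_eq_right h1]
    have hb : ∀ y, |φ y - φ (y + h)| ≤ (Metric.closedBall (0:ℂ) (R+1)).indicator (fun _ => (C:ℝ) * ‖h‖) y := by
      intro y
      by_cases hy : y ∈ Metric.closedBall (0:ℂ) (R+1)
      · rw [Set.indicator_of_mem hy]
        have := hC.dist_le_mul y (y + h)
        rw [Real.dist_eq, dist_eq_norm] at this
        simpa using this
      · rw [Set.indicator_of_notMem hy]
        have hy' : R + 1 < ‖y‖ := by simpa using hy
        have z1 : φ y = 0 := by
          by_contra hne; linarith [hR y hne]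
        have z2 : φ (y + h) = 0 := by
          by_contra hne
          have := hR _ hne
          have h3 : ‖y‖ ≤ ‖y + h‖ + ‖h‖ := by
            calc ‖y‖ = ‖(y + h) - h‖ := by congr 1; ring
              _ ≤ _ := norm_sub_le _ _
          linarith
        rw [z1, z2]; simp
    have hind : Integrable ((Metric.closedBall (0:ℂ) (R+1)).indicator (fun _ => (C:ℝ) * ‖h‖)) := by
      rw [integrable_indicator_iff Metric.isClosed_closedBall.measurableSet]
      exact integrableOn_const (isCompact_closedBall _ _).measure_lt_top.ne
    have := integral_mono hi2.abs hind hb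
    rw [integral_indicator Metric.isClosed_closedBall.measurableSet, setIntegral_const, smul_eq_mul] at this
    calc _ ≤ V * (C * ‖h‖) := this
      _ ≤ _ := by nlinarith [mul_nonneg hI10 (norm_nonneg h)]
  · rw [min_eq_left h1]
    have : ∫ y, |φ y - φ (y + h)| ≤ ∫ y, (|φ y| + |φ (y + h)|) :=
      integral_mono hi2.abs (hi.abs.add (hi.comp_add_right h).abs) (fun y => abs_sub _ _)
    rw [integral_add hi.abs (hi.comp_add_right h).abs, integral_add_right_eq_self (fun y => |φ y|) h] at this
    have : 0 ≤ C * V := by positivity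
    linarith

theorem psi_L1 (φ : ℂ → ℝ) (ε : ℝ) (hε : 0 < ε) (h : ℂ) :
    ∫ z, |ε⁻¹^2 * φ (ε⁻¹ • z) - ε⁻¹^2 * φ (ε⁻¹ • (z + h))| = ∫ y, |φ y - φ (y + ε⁻¹ • h)| := by
  have e : ∀ z, |ε⁻¹^2 * φ (ε⁻¹ • z) - ε⁻¹^2 * φ (ε⁻¹ • (z + h))| =
      ε⁻¹^2 * (fun y => |φ y - φ (y + ε⁻¹ • h)|) (ε⁻¹ • z) := by
    intro z
    rw [← mul_sub, abs_mul, abs_of_nonneg (by positivity), smul_add]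
  rw [integral_congr_ae (Filter.Eventually.of_forall e), integral_const_mul,
    Measure.integral_comp_smul volume (fun y => |φ y - φ (y + ε⁻¹ • h)|), Complex.finrank_real_complex, smul_eq_mul,
    abs_of_nonneg (by positivity)]
  field_simp
end Aux19

namespace Aux19

theorem min_rpow (a t : ℝ) (ha0 : 0 < a) (ha1 : a ≤ 1) (ht : 0 < t) : min 1 t ≤ t ^ a := by
  rcases le_total 1 t with h | h
  · exact (min_le_left _ _).trans (Real.one_le_rpow h ha0.le)
  · refine (min_le_right _ _).trans ?_
    calc t = t ^ (1:ℝ) := (Real.rpow_one t).symm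
      _ ≤ t ^ a := Real.rpow_le_rpow_of_exponent_ge ht h ha1

theorem gnorm_le_norm_c (q : GaussianInt) : gnorm q ≤ ‖toComplex q‖ := by
  unfold gnorm
  rw [GaussianInt.intCast_re, GaussianInt.intCast_im]
  exact max_le (Complex.abs_re_le_norm _) (Complex.abs_im_le_norm _)

theorem norm_c_le_gnorm (q : GaussianInt) : ‖toComplex q‖ ≤ 2 * gnorm q := by
  refine (Complex.norm_le_abs_re_add_abs_im _).trans ?_
  rw [← GaussianInt.intCast_re, ← GaussianInt.intCast_im]
  unfold gnorm
  linarith [le_max_left |(q.re:ℝ)| |(q.im:ℝ)|, le_max_right |(q.re:ℝ)| |(q.im:ℝ)|]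

theorem coef_bound (τ : ℝ) (hτ : 1 < τ) (φ : ℂ → ℝ) (hφ : ContDiff ℝ 1 φ) (hφpos : ∀ x, 0 ≤ φ x)
    (hφsupp : Function.support φ ⊆ {z : ℂ | snorm2 z ≤ 1}) :
    ∃ B : ℝ, 0 ≤ B ∧ ∀ M : ℝ, 4 ≤ M → ∀ q ∈ PM M, ∀ ℓ : GaussianInt, ℓ ≠ 0 → 2 ≤ gnorm ℓ →
      (∀ h : ℂ, IntegrableOn (fun x => Phi φ (M ^ (-τ) / 2) (toComplex q * x + h)) unitSquare volume) ∧
      ‖cq (fun z => (M ^ (-τ) / 2)⁻¹ ^ 2 * φ ((M ^ (-τ) / 2)⁻¹ • z)) q ℓ‖ ≤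
        B * M^2 * gnorm ℓ ^ (-(2 / (1 + τ))) := by
  have hR : ∀ z, φ z ≠ 0 → ‖z‖ ≤ 2 := by
    intro z hz
    have h1 : snorm2 z ≤ 1 := hφsupp hz
    unfold snorm2 at h1
    refine (Complex.norm_le_abs_re_add_abs_im _).trans ?_
    linarith [le_max_left |z.re| |z.im|, le_max_right |z.re| |z.im|]
  obtain ⟨L, hL0, hL⟩ := phi_L1 φ hφ 2 hR
  refine ⟨25 * L, by positivity, fun M hM q hq ℓ hℓ h2 => ?_⟩
  have hM0 : 0 < M := by linarith
  set ε : ℝ := M ^ (-τ) / 2 with hε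
  have hε0 : 0 < ε := by positivity
  set ψ : ℂ → ℝ := fun z => ε⁻¹ ^ 2 * φ (ε⁻¹ • z) with hψ
  have hc : Continuous ψ := by
    have := hφ.continuous
    fun_prop
  have h0 : ∀ z, 0 ≤ ψ z := fun z => mul_nonneg (by positivity) (hφpos _)
  have hRψ : ∀ z, ψ z ≠ 0 → ‖z‖ ≤ 2 * ε := by
    intro z hz
    have h1 := hR _ (right_ne_zero_of_mul hz)
    rw [norm_smul, Real.norm_of_nonneg (by positivity), inv_mul_le_iff₀ hε0] at h1
    linarith
  have hq0 : q ≠ 0 := hq.1.ne_zero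
  refine ⟨fun h => per_int ψ hc h0 (2 * ε) hRψ q hq0 h, ?_⟩
  obtain ⟨h, hn, hb⟩ := cq_bound ψ hc h0 (2 * ε) hRψ q ℓ hq0 hℓ
  have e1 := psi_L1 φ ε hε0 h
  have e2 := hL (ε⁻¹ • h)
  rw [← e1] at e2
  set g := gnorm ℓ with hg
  have hg0 : 0 < g := by linarith
  have hnε : ‖ε⁻¹ • h‖ ≤ 2 * M ^ (1 + τ) / g := by
    rw [norm_smul, Real.norm_of_nonneg (by positivity), hn, hε, Real.rpow_neg hM0.le,
      Real.rpow_add hM0, Real.rpow_one]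
    have a1 : ‖toComplex q‖ ≤ 2 * M := (norm_c_le_gnorm q).trans (by linarith [hq.2.2])
    have a2 : g ≤ ‖toComplex ℓ‖ := gnorm_le_norm_c ℓ
    have hMτ : 0 < M ^ τ := by positivity
    calc ((M ^ τ)⁻¹ / 2)⁻¹ * (‖toComplex q‖ / (2 * ‖toComplex ℓ‖)) ≤
        ((M ^ τ)⁻¹ / 2)⁻¹ * ((2 * M) / (2 * g)) := by gcongr
      _ = _ := by field_simp
  set a := 2 / (1 + τ) with ha
  have ha0 : 0 < a := by positivity
  have ha1 : a ≤ 1 := by rw [ha, div_le_one (by linarith)]; linarith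
  have ht0 : 0 < 2 * M ^ (1 + τ) / g := by positivity
  have hmin : min 1 ‖ε⁻¹ • h‖ ≤ 2 * M^2 * g ^ (-a) := by
    refine (min_le_min_left 1 hnε).trans ((min_rpow a _ ha0 ha1 ht0).trans ?_)
    rw [Real.div_rpow (by positivity) hg0.le, Real.mul_rpow (by norm_num) (by positivity),
      ← Real.rpow_mul hM0.le, show (1 + τ) * a = 2 by rw [ha]; field_simp, Real.rpow_neg hg0.le,
      div_eq_mul_inv]
    have : (2:ℝ) ^ a ≤ 2 := by
      calc (2:ℝ) ^ a ≤ 2 ^ (1:ℝ) := Real.rpow_le_rpow_of_exponent_le (by norm_num) ha1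
        _ = 2 := by norm_num
    rw [show M ^ (2:ℝ) = M ^ 2 from by norm_cast]
    gcongr
  have e3 : (∫ z, |ψ z - ψ (z + h)|) ≤ L * (2 * M^2 * g ^ (-a)) :=
    le_trans e2 (mul_le_mul_of_nonneg_left hmin hL0)
  linarith

theorem FMP_coef (τ M : ℝ) (φ : ℂ → ℝ) (ℓ : GaussianInt)
    (hinteg : ∀ q ∈ PM M, IntegrableOn (fun x => Phi φ (M ^ (-τ) / 2) (toComplex q * x)) unitSquare volume) :
    fcoeff (fun x => (FMP φ τ M x : ℂ)) (toComplex ℓ) =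
      (((PM M).ncard : ℝ)⁻¹ : ℝ) * ∑ q ∈ (PM_finite M).toFinset,
        cq (fun z => (M ^ (-τ) / 2)⁻¹ ^ 2 * φ ((M ^ (-τ) / 2)⁻¹ • z)) q ℓ := by
  have hF : ∀ x, FMP φ τ M x = ((PM M).ncard : ℝ)⁻¹ *
      ∑ q ∈ (PM_finite M).toFinset, Phi φ (M ^ (-τ) / 2) (toComplex q * x) := by
    intro x
    unfold FMP
    congr 1
    rw [tsum_subtype (PM M) (fun q => Phi φ (M ^ (-τ) / 2) (toComplex q * x)),
      tsum_eq_sum (s := (PM_finite M).toFinset)]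
    · apply Finset.sum_congr rfl
      intro q hq
      exact Set.indicator_of_mem ((PM_finite M).mem_toFinset.1 hq) _
    · intro q hq
      exact Set.indicator_of_notMem (fun h => hq ((PM_finite M).mem_toFinset.2 h)) _
  unfold fcoeff cq
  rw [← integral_finsetSum, ← integral_const_mul]
  · congr 1; ext x
    simp only [hF]
    push_cast
    rw [mul_left_comm, Finset.mul_sum]
    rfl
  · intro q hq
    have := hinteg q ((PM_finite M).mem_toFinset.1 hq)
    refine Integrable.bdd_mul (c := 1) (Integrable.ofReal this) (ec_cont _).aestronglyMeasurable ?_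
    exact Filter.Eventually.of_forall fun x => (ec_norm _).le

theorem main (τ : ℝ) (hτ : 1 < τ) (φ : ℂ → ℝ) (hφ : ContDiff ℝ 1 φ) (hφpos : ∀ x, 0 ≤ φ x)
    (hφsupp : Function.support φ ⊆ {z : ℂ | snorm2 z ≤ 1}) :
    ∃ C : ℝ, ∀ M : ℝ, 4 ≤ M → ∀ ℓ : GaussianInt, ℓ ≠ 0 → 2 ≤ gnorm ℓ →
      ‖fcoeff (fun x => (FMP φ τ M x : ℂ)) (toComplex ℓ)‖ ≤
        C * gnorm ℓ ^ (-(2 / (1 + τ))) * Real.log (gnorm ℓ) := by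
  classical
  obtain ⟨B, hB0, hB⟩ := coef_bound τ hτ φ hφ hφpos hφsupp
  obtain ⟨c, hc0, hc⟩ := PM_lower
  refine ⟨12 * B / c, fun M hM ℓ hℓ h2 => ?_⟩
  have hM0 : 0 < M := by linarith
  have hlogM : 0 < Real.log M := Real.log_pos (by linarith)
  have hlogg : 0 ≤ Real.log (gnorm ℓ) := Real.log_nonneg (by linarith)
  have hg : 0 ≤ gnorm ℓ ^ (-(2 / (1 + τ))) := Real.rpow_nonneg (by linarith) _
  rw [FMP_coef τ M φ ℓ (fun q hq => by simpa using (hB M hM q hq ℓ hℓ h2).1 0)]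
  set X := gnorm ℓ ^ (-(2 / (1 + τ))) with hX
  rcases Nat.eq_zero_or_pos (PM M).ncard with hz | hz
  · rw [hz]; simp; positivity
  have hlow := hc M hM hz.ne'
  have hN : (0:ℝ) < (PM M).ncard := by exact_mod_cast hz
  have hdiv := div_count' M hM ℓ hℓ h2
  set D : ℝ := ({q | q ∈ PM M ∧ star q ∣ ℓ}.ncard : ℝ) with hD
  have hsum : ‖∑ q ∈ (PM_finite M).toFinset,
        cq (fun z => (M ^ (-τ) / 2)⁻¹ ^ 2 * φ ((M ^ (-τ) / 2)⁻¹ • z)) q ℓ‖ ≤ D * (B * M^2 * X) := by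
    have hset : {q | q ∈ PM M ∧ star q ∣ ℓ} = (((PM_finite M).toFinset.filter fun q => star q ∣ ℓ : Finset GaussianInt) : Set GaussianInt) := by
      ext q; simp
    rw [hD, hset, Set.ncard_coe_finset, ← nsmul_eq_mul]
    refine (norm_sum_le _ _).trans ?_
    rw [← Finset.sum_filter_add_sum_filter_not _ (fun q => star q ∣ ℓ)]
    rw [Finset.sum_eq_zero (s := Finset.filter (fun q => ¬ star q ∣ ℓ) _), add_zero]
    · apply Finset.sum_le_card_nsmul
      intro q hq
      exact (hB M hM q ((PM_finite M).mem_toFinset.1 (Finset.mem_filter.1 hq).1) ℓ hℓ h2).2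
    · intro q hq
      rw [Finset.mem_filter] at hq
      have hq1 := (PM_finite M).mem_toFinset.1 hq.1
      rw [cq_zero _ q ℓ hq1.1.ne_zero hq.2, norm_zero]
  rw [norm_mul, Complex.norm_real, Real.norm_of_nonneg (by positivity)]
  have hD0 : 0 ≤ D := by positivity
  calc _ ≤ ((PM M).ncard : ℝ)⁻¹ * (D * (B * M^2 * X)) := by gcongr
    _ ≤ _ := by
      rw [inv_mul_le_iff₀ hN]
      have k1 : D * (c * M^2) ≤ D * ((PM M).ncard * Real.log M) := by gcongr
      have k2 : (PM M).ncard * (D * Real.log M) ≤ (PM M).ncard * (12 * Real.log (gnorm ℓ)) := by gcongr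
      have k3 : D * (c * M^2) * (B * X) ≤ (PM M).ncard * (12 * Real.log (gnorm ℓ)) * (B * X) := by
        apply mul_le_mul_of_nonneg_right _ (by positivity)
        linarith
      have k4 : (PM M).ncard * (12 * B / c * X * Real.log (gnorm ℓ)) =
        (PM M).ncard * (12 * Real.log (gnorm ℓ)) * (B * X) / c := by field_simp
      rw [k4, le_div_iff₀ hc0]
      linarith
end Aux19

theorem stmt19 (τ : ℝ) (hτ : 1 < τ) (K : ℕ) (φ : ℂ → ℝ) (hφ : ContDiff ℝ K φ) (hφpos : ∀ x, 0 ≤ φ x)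
    (hφsupp : Function.support φ ⊆ {z : ℂ | snorm2 z ≤ 1})
    (hφint : ∫ x : ℂ, φ x = 1)
    (hK : 2 + 2 / (1 + τ) < (K : ℝ)) :
    ∃ C : ℝ, ∀ M : ℝ, 4 ≤ M → ∀ ℓ : GaussianInt, ℓ ≠ 0 → 2 ≤ gnorm ℓ →
      ‖fcoeff (fun x => (FMP φ τ M x : ℂ)) (toComplex ℓ)‖ ≤
        C * gnorm ℓ ^ (-(2 / (1 + τ))) * Real.log (gnorm ℓ) := by
  refine Aux19.main τ hτ φ (hφ.of_le ?_) hφpos hφsupp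
  have h1 : 0 < 2 / (1 + τ) := by positivity
  have h2 : (1:ℝ) ≤ K := by linarith
  exact_mod_cast h2
end
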